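/- arXiv:1807.08795 — 2 statements merged into one kernel-verified Lean document; each statement's English description precedes it below -/
import Mathlib

section
/- Let S = (s_1 < ⋯ < s_r) be a strictly increasing sequence of positive integers with r ≥ 2, let a ≠ b be elements of {1,…,r}, and set L = {x ∈ ℝ^r : x_a = x_b}. Then there exists a homeomorphism ψ from Π_S ∩ L (with the subspace topology) onto the permutohedron Π_{(s_1,…,s_{r−1})} ⊂ ℝ^{r−1} such that: (i) for every ordered partition 𝔭 of {1,…,r} in which a and b lie in different blocks, Π_𝔭 ∩ L = ∅; and (ii) for every ordered partition 𝔭 of {1,…,r} in which a and b lie in the same block, ψ maps Π_𝔭 ∩ L homeomorphically onto the face of Π_{(s_1,…,s_{r−1})} associated with the b-reduction 𝔭' of 𝔭. -/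
/-- The permutohedron in `ℝ^r` on the values `s 0, …, s (r-1)`. -/
def permutohedron (r : ℕ) (s : ℕ → ℝ) : Set (Fin r → ℝ) :=
  convexHull ℝ {x : Fin r → ℝ | ∃ σ : Equiv.Perm (Fin r), ∀ i, x i = s (σ i)}

/-- An ordered partition of `{1,…,r}` with `k+1` blocks: pairwise disjoint nonempty
subsets covering everything. -/
def IsOrderedPartition {r k : ℕ} (Q : Fin (k + 1) → Finset (Fin r)) : Prop :=
  (∀ j, (Q j).Nonempty) ∧ (∀ j j', j ≠ j' → Disjoint (Q j) (Q j')) ∧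
    Finset.univ.biUnion Q = (Finset.univ : Finset (Fin r))

/-- The face of the permutohedron on `s` associated with the ordered partition `Q`:
cut out by the equalities `∑_{i ∈ P_1 ∪ ⋯ ∪ P_j} x_i = τ_{m_j}`. -/
def partitionFace {r k : ℕ} (s : ℕ → ℝ) (Q : Fin (k + 1) → Finset (Fin r)) :
    Set (Fin r → ℝ) :=
  permutohedron r s ∩
    ⋂ j : Fin (k + 1),
      {x : Fin r → ℝ |
        ∑ i ∈ (Finset.univ.filter (fun j' => j' ≤ j)).biUnion Q, x i =
          ∑ i ∈ Finset.range
              (∑ j' ∈ Finset.univ.filter (fun j' => j' ≤ j), (Q j').card),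
            s i}

/-- Re-indexing map of `{1,…,r} \ {b}` onto `{1,…,r-1}` (here `r` is `r+2`): indices below `b`
are kept, indices above `b` are shifted down by one. -/
def reduceIdx {r : ℕ} (b : Fin (r + 2)) (x : Fin (r + 2)) : Fin (r + 1) :=
  if _h : (x : ℕ) < (b : ℕ) then ⟨x, by have hb := b.isLt; omega⟩
  else ⟨(x : ℕ) - 1, by have hx := x.isLt; omega⟩

/-- The `b`-reduction of an ordered partition: drop `b` and re-index. -/
def reducePartition {r k : ℕ} (b : Fin (r + 2)) (Q : Fin (k + 1) → Finset (Fin (r + 2))) :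
    Fin (k + 1) → Finset (Fin (r + 1)) :=
  fun j => ((Q j).erase b).image (reduceIdx b)

open Finset in
theorem ph_parts (c d : ℕ → ℝ) (n : ℕ) :
    ∑ i ∈ range (n+1), c i * d i = (∑ i ∈ range (n+1), d i) * c n
      - ∑ j ∈ range n, (∑ i ∈ range (j+1), d i) * (c (j+1) - c j) := by
  induction n with
  | zero => simp [mul_comm]
  | succ n ih =>
    rw [sum_range_succ, ih, sum_range_succ d (n+1),
      sum_range_succ (fun j => (∑ i ∈ range (j+1), d i) * (c (j+1) - c j)) n]
    ring

open Finset in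
theorem ph_uniq (N : ℕ) (q α β z : ℕ → ℝ) (hq : ∀ i, i ≤ N → 0 < q i)
    (hα : ∀ j, j < N → 0 ≤ α j) (hβ : ∀ j, j < N → 0 ≤ β j) (hab : ∀ j, j < N → 0 < α j + β j)
    (h : ∀ j, j < N → α j * (z (j+1) - z j) = β j * ∑ i ∈ range (j+1), q i * z i)
    (h0 : ∑ i ∈ range (N+1), q i * z i = 0) : ∀ i, i ≤ N → z i = 0 := by
  have key := ph_parts z (fun i => q i * z i) N
  simp only [h0, zero_mul, zero_sub] at key
  have h1 : 0 ≤ ∑ j ∈ range N, (∑ i ∈ range (j+1), q i * z i) * (z (j+1) - z j) := by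
    apply sum_nonneg
    intro j hj
    have hj := mem_range.1 hj
    have e := h j hj
    generalize (∑ i ∈ range (j+1), q i * z i) = Z at *
    generalize z (j+1) - z j = g at *
    have : (α j + β j) * (Z * g) = α j * g^2 + β j * Z^2 := by linear_combination (Z - g) * e
    have h2 : 0 ≤ (α j + β j) * (Z * g) := by
      rw [this]; have := hα j hj; have := hβ j hj; positivity
    exact nonneg_of_mul_nonneg_right h2 (hab j hj)
  have h2 : ∀ i ∈ range (N+1), 0 ≤ z i * (q i * z i) := by
    intro i hi
    have := hq i (by have := mem_range.1 hi; omega)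
    have : z i * (q i * z i) = q i * z i ^2 := by ring
    rw [this]; positivity
  have h3 : ∑ i ∈ range (N+1), z i * (q i * z i) = 0 := le_antisymm (by linarith) (sum_nonneg h2)
  intro i hi
  have := (sum_eq_zero_iff_of_nonneg h2).1 h3 i (by simp; omega)
  have hq := hq i hi
  have h4 : z i * z i = 0 := by
    have : q i * (z i * z i) = 0 := by linarith
    rcases mul_eq_zero.1 this with h | h
    · linarith
    · exact h
  simpa using h4

/-- extension by zero -/
def phE {n : ℕ} (z : Fin n → ℝ) (i : ℕ) : ℝ := if h : i < n then z ⟨i, h⟩ else 0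

theorem phE_of_lt {n : ℕ} (z : Fin n → ℝ) (i : ℕ) (h : i < n) : phE z i = z ⟨i, h⟩ := by
  simp [phE, h]

theorem phE_add {n : ℕ} (z z' : Fin n → ℝ) (i : ℕ) : phE (z + z') i = phE z i + phE z' i := by
  unfold phE; split <;> simp

theorem phE_smul {n : ℕ} (c : ℝ) (z : Fin n → ℝ) (i : ℕ) : phE (c • z) i = c * phE z i := by
  unfold phE; split <;> simp

open Finset in
theorem ph_solve (N : ℕ) (q α β φ : ℕ → ℝ) (hq : ∀ i, i ≤ N → 0 < q i)
    (hα : ∀ j, j < N → 0 ≤ α j) (hβ : ∀ j, j < N → 0 ≤ β j) (hab : ∀ j, j < N → 0 < α j + β j) :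
    ∃ z : Fin (N+1) → ℝ, (∀ j, j < N → α j * (phE z (j+1) - phE z j)
        = β j * ((∑ i ∈ range (j+1), q i * phE z i) - φ j)) ∧
      ∑ i ∈ range (N+1), q i * phE z i = φ N := by
  let L : (Fin (N+1) → ℝ) →ₗ[ℝ] (Fin (N+1) → ℝ) :=
    { toFun := fun z k => if k.val < N then α k * (phE z (k+1) - phE z k)
          - β k * (∑ i ∈ range (k+1), q i * phE z i) else ∑ i ∈ range (N+1), q i * phE z i
      map_add' := by
        intro x y; ext k
        simp only [phE_add, Pi.add_apply, mul_add, sum_add_distrib]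
        split_ifs <;> ring
      map_smul' := by
        intro c x; ext k
        have : ∀ m, ∑ i ∈ range m, q i * (c * phE x i) = c * ∑ i ∈ range m, q i * phE x i := by
          intro m; rw [mul_sum]; apply sum_congr rfl; intros; ring
        simp only [phE_smul, Pi.smul_apply, smul_eq_mul, RingHom.id_apply, this]
        split_ifs <;> ring }
  have hL : ∀ z k, L z k = if k.val < N then α k * (phE z (k+1) - phE z k)
          - β k * (∑ i ∈ range (k+1), q i * phE z i) else ∑ i ∈ range (N+1), q i * phE z i :=
    fun _ _ => rfl
  have inj : Function.Injective L := by
    rw [injective_iff_map_eq_zero]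
    intro z hz
    have h := ph_uniq N q α β (phE z) hq hα hβ hab (by
      intro j hj
      have := congrFun hz ⟨j, by omega⟩
      rw [hL] at this
      simp only [hj, if_true, Pi.zero_apply] at this
      linarith) (by
      have := congrFun hz ⟨N, by omega⟩
      rw [hL] at this
      simpa using this)
    ext i
    have := h i (by omega)
    rwa [phE_of_lt _ _ i.2] at this
  obtain ⟨z, hz⟩ := (LinearMap.injective_iff_surjective.1 inj)
    (fun k => if k.val < N then - β k * φ k else φ N)
  refine ⟨z, ?_, ?_⟩
  · intro j hj
    have := congrFun hz ⟨j, by omega⟩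
    rw [hL] at this
    simp only [hj, if_true] at this
    linarith
  · have := congrFun hz ⟨N, by omega⟩
    rw [hL] at this
    simpa using this

open Finset in
/-- feasibility of the solution -/
theorem ph_feas (N : ℕ) (q α β Φ z : ℕ → ℝ) (hq : ∀ i, i ≤ N → 0 < q i)
    (hα : ∀ j, j < N → 0 ≤ α j) (hβ : ∀ j, j < N → 0 ≤ β j) (hab : ∀ j, j < N → 0 < α j + β j)
    (h : ∀ j, j < N → α j * (z (j+1) - z j) = β j * ((∑ i ∈ range (j+1), q i * z i) - Φ (j+1)))
    (h0 : ∑ i ∈ range (N+1), q i * z i = Φ (N+1)) (hΦ : Φ 0 = 0)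
    (hconv : ∀ j, j < N → (Φ (j+1) - Φ j) / q j < (Φ (j+2) - Φ (j+1)) / q (j+1)) :
    (∀ j, j ≤ N + 1 → Φ j ≤ ∑ i ∈ range j, q i * z i) ∧ (∀ j, j < N → z j ≤ z (j+1)) := by
  set Z : ℕ → ℝ := fun j => (∑ i ∈ range j, q i * z i) - Φ j with hZ
  have hZ0 : Z 0 = 0 := by simp [hZ, hΦ]
  have hZN : Z (N+1) = 0 := by simp [hZ, h0]
  have claim : ∀ j, j < N → Z (j+1) ≤ Z j → Z (j+1) ≤ Z (j+2) → z j < z (j+1) := by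
    intro j hj h1 h2
    have q1 := hq j (by omega)
    have q2 := hq (j+1) (by omega)
    have a1 : q j * z j ≤ Φ (j+1) - Φ j := by
      simp only [hZ, sum_range_succ _ j] at h1; linarith
    have a2 : Φ (j+2) - Φ (j+1) ≤ q (j+1) * z (j+1) := by
      simp only [hZ, sum_range_succ _ (j+1)] at h2; linarith
    calc z j ≤ (Φ (j+1) - Φ j) / q j := by rw [le_div_iff₀ q1]; linarith
      _ < _ := hconv j hj
      _ ≤ _ := by rw [div_le_iff₀ q2]; linarith
  have sgn : ∀ j, j < N → 0 ≤ Z (j+1) * (z (j+1) - z j) := by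
    intro j hj
    have e : α j * (z (j+1) - z j) = β j * Z (j+1) := h j hj
    generalize Z (j+1) = Y at *
    generalize z (j+1) - z j = g at *
    have : (α j + β j) * (Y * g) = α j * g^2 + β j * Y^2 := by linear_combination (Y - g) * e
    have h2 : 0 ≤ (α j + β j) * (Y * g) := by
      rw [this]; have := hα j hj; have := hβ j hj; positivity
    exact nonneg_of_mul_nonneg_right h2 (hab j hj)
  have pos : ∀ j, j ≤ N + 1 → 0 ≤ Z j := by
    obtain ⟨m, hm, hmin⟩ := exists_min_image (range (N+2)) Z ⟨0, by simp⟩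
    have : 0 ≤ Z m := by
      by_contra hneg
      push Not at hneg
      have m0 : m ≠ 0 := by rintro rfl; linarith
      have mN : m ≠ N+1 := by rintro rfl; linarith
      obtain ⟨j, rfl⟩ := Nat.exists_eq_succ_of_ne_zero m0
      have hm := mem_range.1 hm
      have hj : j < N := by omega
      have c := claim j hj (hmin _ (by simp; omega)) (hmin _ (by simp; omega))
      have := sgn j hj
      have : Z (j+1) * (z (j+1) - z j) < 0 := mul_neg_of_neg_of_pos hneg (by linarith)
      linarith
    intro j hj
    exact this.trans (hmin j (by simp; omega))
  refine ⟨fun j hj => by have := pos j hj; simp only [hZ] at this; linarith, ?_⟩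
  intro j hj
  by_contra hlt
  push Not at hlt
  have s := sgn j hj
  have p := pos (j+1) (by omega)
  have : Z (j+1) = 0 := by
    by_contra hne
    have : 0 < Z (j+1) := lt_of_le_of_ne p (Ne.symm hne)
    have := mul_neg_of_pos_of_neg this (show z (j+1) - z j < 0 by linarith)
    linarith
  have := claim j hj (by rw [this]; exact pos _ (by omega)) (by rw [this]; exact pos _ (by omega))
  linarith

/-- partial sums -/
def phT (u : ℕ → ℝ) (m : ℕ) : ℝ := ∑ i ∈ Finset.range m, u i

theorem phT_add (u : ℕ → ℝ) (m k : ℕ) :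
    phT u (m + k) = phT u m + ∑ i ∈ Finset.range k, u (m + i) := Finset.sum_range_add _ _ _

theorem phT_add_le (u : ℕ → ℝ) (m k : ℕ) (c : ℝ) (h : ∀ i, i < m + k → u i ≤ c) :
    phT u (m + k) ≤ phT u m + k * c := by
  rw [phT_add]
  have := Finset.sum_le_card_nsmul (Finset.range k) (fun i => u (m+i)) c
    (fun i hi => h _ (by have := Finset.mem_range.1 hi; omega))
  simp only [Finset.card_range, nsmul_eq_mul] at this
  linarith

theorem phT_le_add (u : ℕ → ℝ) (m k : ℕ) (c : ℝ) (h : ∀ i, m ≤ i → c ≤ u i) :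
    phT u m + k * c ≤ phT u (m + k) := by
  rw [phT_add]
  have := Finset.card_nsmul_le_sum (Finset.range k) (fun i => u (m+i)) c
    (fun i hi => h _ (by omega))
  simp only [Finset.card_range, nsmul_eq_mul] at this
  linarith

/-- the weighted base polytope -/
def phB {n : ℕ} (u : ℕ → ℝ) (w : Fin n → ℕ) : Set (Fin n → ℝ) :=
  {y | (∀ A : Finset (Fin n), phT u (∑ i ∈ A, w i) ≤ ∑ i ∈ A, (w i : ℝ) * y i) ∧
    ∑ i, (w i : ℝ) * y i = phT u (∑ i, w i)}

theorem ph_tight_lt {n : ℕ} (u : ℕ → ℝ) (hu : StrictMono u) (w : Fin n → ℕ) (hw : ∀ i, 0 < w i)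
    (y : Fin n → ℝ) (hy : y ∈ phB u w) (A : Finset (Fin n))
    (hA : ∑ i ∈ A, (w i : ℝ) * y i = phT u (∑ i ∈ A, w i)) (i k : Fin n) (hi : i ∈ A)
    (hk : k ∉ A) : y i < y k := by
  have h1 := hy.1 (A.erase i)
  have h2 := hy.1 (insert k A)
  rw [Finset.sum_insert hk, Finset.sum_insert hk, hA, add_comm (w k)] at h2
  have e1 := Finset.add_sum_erase A w hi
  have e2 := Finset.add_sum_erase A (fun i => (w i : ℝ) * y i) hi
  have wi : (0:ℝ) < w i := by exact_mod_cast hw i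
  have wk : (0:ℝ) < w k := by exact_mod_cast hw k
  have hwi := hw i
  rw [← e1, add_comm (w i)] at hA
  rw [← e1, add_comm (w i)] at h2
  set m' := ∑ x ∈ A.erase i, w x
  have h3 := phT_add_le u m' (w i) (u (m' + w i - 1)) (fun j hj => hu.monotone (by omega))
  have h4 := phT_le_add u (m' + w i) (w k) (u (m' + w i)) (fun j hj => hu.monotone (by omega))
  have h5 : (w i : ℝ) * y i ≤ w i * u (m' + w i - 1) := by linarith
  have h6 : (w k : ℝ) * u (m' + w i) ≤ w k * y k := by linarith
  have h7 := le_of_mul_le_mul_left h5 wi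
  have h8 := le_of_mul_le_mul_left h6 wk
  have := hu (show m' + w i - 1 < m' + w i by omega)
  linarith

/-- initial segment -/
def phP (n j : ℕ) : Finset (Fin n) := Finset.univ.filter (fun i => i.val < j)

theorem phP_zero (n : ℕ) : phP n 0 = ∅ := by simp [phP]

theorem phP_top (n : ℕ) : phP n n = Finset.univ := by
  ext i; simp [phP]

theorem mem_phP {n j : ℕ} {i : Fin n} : i ∈ phP n j ↔ i.val < j := by simp [phP]

theorem phP_succ (n j : ℕ) (h : j < n) : phP n (j+1) = insert ⟨j, h⟩ (phP n j) := by
  ext i; simp [phP, Fin.ext_iff]; omega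

theorem phP_sum {M : Type*} [AddCommMonoid M] {n j : ℕ} (h : j < n) (g : Fin n → M) :
    ∑ i ∈ phP n (j+1), g i = (∑ i ∈ phP n j, g i) + g ⟨j, h⟩ := by
  rw [phP_succ n j h, Finset.sum_insert (by simp [mem_phP]), add_comm]

theorem phP_sum_range {n j : ℕ} (h : j ≤ n) (g : Fin n → ℝ) :
    ∑ i ∈ phP n j, g i = ∑ i ∈ Finset.range j, phE g i := by
  induction j with
  | zero => simp [phP_zero]
  | succ j ih =>
    rw [phP_sum (by omega), ih (by omega), Finset.sum_range_succ, phE_of_lt _ _ (by omega)]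

theorem phE_mul {n : ℕ} (f g : Fin n → ℝ) (i : ℕ) :
    phE (fun i => f i * g i) i = phE f i * phE g i := by
  unfold phE; split <;> simp

theorem ph_locate (W : ℕ → ℕ) (h0 : W 0 = 0) (n m : ℕ) (hm : m ≤ W (n+1)) :
    ∃ j, j < n+1 ∧ W j ≤ m ∧ m ≤ W (j+1) := by
  induction n with
  | zero => exact ⟨0, by omega, by omega, hm⟩
  | succ n ih =>
    by_cases h : m ≤ W (n+1)
    · obtain ⟨j, h1, h2⟩ := ih h
      exact ⟨j, by omega, h2⟩
    · exact ⟨n+1, by omega, by omega, hm⟩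

theorem ph_prefix {N : ℕ} (u : ℕ → ℝ) (hu : StrictMono u) (w : Fin (N+1) → ℕ)
    (y : Fin (N+1) → ℝ) (hy : Monotone y)
    (h : ∀ j, j ≤ N+1 → phT u (∑ i ∈ phP (N+1) j, w i) ≤ ∑ i ∈ phP (N+1) j, (w i : ℝ) * y i)
    (A : Finset (Fin (N+1))) : phT u (∑ i ∈ A, w i) ≤ ∑ i ∈ A, (w i : ℝ) * y i := by
  obtain ⟨j, hj, h1, h2⟩ := ph_locate (fun j => ∑ i ∈ phP (N+1) j, w i) (by simp [phP_zero]) N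
    (∑ i ∈ A, w i) (by
      simp only [phP_top]
      exact Finset.sum_le_sum_of_subset (Finset.subset_univ _))
  set c := y ⟨j, hj⟩ with hc
  have key : ∑ i ∈ phP (N+1) j, (w i : ℝ) * (y i - c) ≤ ∑ i ∈ A, (w i : ℝ) * (y i - c) := by
    rw [← Finset.sum_filter_add_sum_filter_not A (fun i => i ∈ phP (N+1) j)]
    have a1 : 0 ≤ ∑ i ∈ A.filter (fun i => i ∉ phP (N+1) j), (w i : ℝ) * (y i - c) := by
      apply Finset.sum_nonneg
      intro i hi
      simp only [Finset.mem_filter, mem_phP, not_lt] at hi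
      have : c ≤ y i := hy (by rw [Fin.le_def]; exact hi.2)
      exact mul_nonneg (by positivity) (by linarith)
    have a2 : ∑ i ∈ phP (N+1) j, (w i : ℝ) * (y i - c) ≤
        ∑ i ∈ A.filter (fun i => i ∈ phP (N+1) j), (w i : ℝ) * (y i - c) := by
      have hsub : A.filter (fun i => i ∈ phP (N+1) j) ⊆ phP (N+1) j := by
        intro i hi; exact (Finset.mem_filter.1 hi).2
      rw [← Finset.sum_sdiff hsub]
      have : ∑ i ∈ phP (N+1) j \ A.filter (fun i => i ∈ phP (N+1) j), (w i : ℝ) * (y i - c) ≤ 0 := by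
        apply Finset.sum_nonpos
        intro i hi
        have hi := mem_phP.1 (Finset.mem_sdiff.1 hi).1
        have : y i ≤ c := hy (by rw [Fin.le_def]; exact hi.le)
        exact mul_nonpos_of_nonneg_of_nonpos (by positivity) (by linarith)
      linarith
    linarith
  have ex : ∀ C : Finset (Fin (N+1)), ∑ i ∈ C, (w i : ℝ) * (y i - c) =
      ∑ i ∈ C, (w i : ℝ) * y i - ((∑ i ∈ C, w i : ℕ) : ℝ) * c := by
    intro C
    push_cast
    rw [Finset.sum_mul, ← Finset.sum_sub_distrib]
    exact Finset.sum_congr rfl (fun i _ => by ring)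
  rw [ex, ex] at key
  have f1 := h j (by omega)
  have f2 := h (j+1) (by omega)
  rw [phP_sum hj (fun i => (w i : ℝ) * y i)] at f2
  have wj := phP_sum hj w
  set W' := ∑ i ∈ phP (N+1) (j+1), w i
  set W := ∑ i ∈ phP (N+1) j, w i
  set m := ∑ i ∈ A, w i
  obtain ⟨d, hd⟩ := Nat.exists_eq_add_of_le h1
  obtain ⟨d', hd'⟩ := Nat.exists_eq_add_of_le h2
  have cw : (w ⟨j, hj⟩ : ℝ) = d + d' := by
    have : w ⟨j, hj⟩ = d + d' := by omega
    rw [this]; push_cast; ring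
  have cm : (m : ℝ) = W + d := by rw [hd]; push_cast; ring
  rw [cm] at key
  by_cases hcase : ∀ i, i < m → u i ≤ c
  · have := phT_add_le u W d c (fun i hi => hcase i (by omega))
    rw [← hd] at this
    linarith
  · push Not at hcase
    obtain ⟨i0, hi0, hi1⟩ := hcase
    have := phT_le_add u m d' c (fun i hi => by
      have := hu (show i0 < i by omega); linarith)
    rw [← hd'] at this
    rw [cw] at f2
    linarith

theorem ph_B_of_prefix {N : ℕ} (u : ℕ → ℝ) (hu : StrictMono u) (w : Fin (N+1) → ℕ)
    (y : Fin (N+1) → ℝ) (hy : Monotone y)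
    (h : ∀ j, j ≤ N+1 → phT u (∑ i ∈ phP (N+1) j, w i) ≤ ∑ i ∈ phP (N+1) j, (w i : ℝ) * y i)
    (h0 : ∑ i, (w i : ℝ) * y i = phT u (∑ i, w i)) : y ∈ phB u w :=
  ⟨ph_prefix u hu w y hy h, h0⟩

theorem phB_comp {n : ℕ} (u : ℕ → ℝ) (w : Fin n → ℕ) (y : Fin n → ℝ) (σ : Equiv.Perm (Fin n)) :
    y ∘ σ ∈ phB u (w ∘ σ) ↔ y ∈ phB u w := by
  unfold phB
  simp only [Set.mem_ofPred_eq, Function.comp]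
  rw [Equiv.sum_comp σ w, Equiv.sum_comp σ (fun i => (w i : ℝ) * y i)]
  refine and_congr_left (fun _ => ⟨fun h A => ?_, fun h A => ?_⟩)
  · have := h (A.map σ.symm.toEmbedding)
    simpa [Finset.sum_map] using this
  · have := h (A.map σ.toEmbedding)
    simpa [Finset.sum_map] using this

theorem phB_closed {n : ℕ} (u : ℕ → ℝ) (w : Fin n → ℕ) : IsClosed (phB u w) := by
  unfold phB
  rw [Set.ofPred_and, Set.ofPred_forall]
  refine IsClosed.inter (isClosed_iInter fun A => isClosed_le (by fun_prop) (by fun_prop))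
    (isClosed_eq (by fun_prop) (by fun_prop))

theorem phB_convex {n : ℕ} (u : ℕ → ℝ) (w : Fin n → ℕ) : Convex ℝ (phB u w) := by
  intro x hx y hy a b ha hb hab
  have ex : ∀ A : Finset (Fin n), ∑ i ∈ A, (w i : ℝ) * (a • x + b • y) i =
      a * ∑ i ∈ A, (w i : ℝ) * x i + b * ∑ i ∈ A, (w i : ℝ) * y i := by
    intro A
    rw [Finset.mul_sum, Finset.mul_sum, ← Finset.sum_add_distrib]
    apply Finset.sum_congr rfl
    intro i _
    simp; ring
  refine ⟨fun A => ?_, ?_⟩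
  · rw [ex]
    have h1 := mul_le_mul_of_nonneg_left (hx.1 A) ha
    have h2 := mul_le_mul_of_nonneg_left (hy.1 A) hb
    have : phT u (∑ i ∈ A, w i) = a * phT u (∑ i ∈ A, w i) + b * phT u (∑ i ∈ A, w i) := by
      rw [← add_mul, hab, one_mul]
    linarith
  · rw [ex, hx.2, hy.2, ← add_mul, hab, one_mul]

theorem phB_compact {n : ℕ} (u : ℕ → ℝ) (w : Fin n → ℕ) (hw : ∀ i, 0 < w i) :
    IsCompact (phB u w) := by
  refine IsCompact.of_isClosed_subset (isCompact_univ_pi (fun i : Fin n =>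
    isCompact_Icc (a := phT u (w i) / w i)
      (b := (phT u (∑ i, w i) - phT u (∑ k ∈ Finset.univ.erase i, w k)) / w i)))
    (phB_closed u w) ?_
  intro y hy i _
  have wi : (0:ℝ) < w i := by exact_mod_cast hw i
  have h1 := hy.1 {i}
  have h2 := hy.1 (Finset.univ.erase i)
  have e2 := Finset.add_sum_erase Finset.univ (fun i => (w i : ℝ) * y i) (Finset.mem_univ i)
  have h3 := hy.2
  simp only [Finset.sum_singleton] at h1
  constructor
  · rw [div_le_iff₀ wi]; linarith
  · rw [le_div_iff₀ wi]; linarith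

theorem ph_rado {N : ℕ} (u : ℕ → ℝ) (hu : StrictMono u) :
    permutohedron (N+1) u = phB u (fun _ : Fin (N+1) => 1) := by
  have vert : (fun i : Fin (N+1) => u i) ∈ phB u (fun _ : Fin (N+1) => 1) := by
    have hs : ∀ j, j ≤ N+1 → ∑ i ∈ phP (N+1) j, u i = phT u (∑ i ∈ phP (N+1) j, 1) := by
      intro j hj
      induction j with
      | zero => simp [phP_zero, phT]
      | succ j ih =>
        have hc : ∀ j, j ≤ N+1 → ∑ i ∈ phP (N+1) j, 1 = j := by
          intro j hj
          induction j with
          | zero => simp [phP_zero]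
          | succ j ih => rw [phP_sum (by omega), ih (by omega)]
        rw [phP_sum (by omega), ih (by omega), hc _ hj, hc _ (by omega)]
        simp [phT, Finset.sum_range_succ]
    apply ph_B_of_prefix u hu
    · intro i j h; exact hu.monotone h
    · intro j hj
      rw [← hs j hj]; simp
    · have := hs (N+1) le_rfl
      rw [phP_top] at this
      simpa using this
  apply Set.Subset.antisymm
  · apply convexHull_min _ (phB_convex _ _)
    rintro x ⟨σ, hσ⟩
    have : x = (fun i : Fin (N+1) => u i) ∘ σ := funext hσ
    rw [this]
    exact (phB_comp u (fun _ => 1) _ σ).2 vert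
  · intro x hx
    by_contra hn
    have hfin : {x : Fin (N+1) → ℝ | ∃ σ : Equiv.Perm (Fin (N+1)), ∀ i, x i = u (σ i)}.Finite := by
      have : {x : Fin (N+1) → ℝ | ∃ σ : Equiv.Perm (Fin (N+1)), ∀ i, x i = u (σ i)} =
          Set.range (fun σ : Equiv.Perm (Fin (N+1)) => fun i => u (σ i)) := by
        ext x; simp only [Set.mem_ofPred_eq, Set.mem_range, funext_iff]
        exact ⟨fun ⟨σ, h⟩ => ⟨σ, fun i => (h i).symm⟩, fun ⟨σ, h⟩ => ⟨σ, fun i => (h i).symm⟩⟩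
      rw [this]; exact Set.finite_range _
    obtain ⟨f, t, hfx, hft⟩ := geometric_hahn_banach_point_closed (convex_convexHull ℝ _)
      (hfin.isCompact_convexHull (𝕜 := ℝ)).isClosed hn
    have hf : ∀ x : Fin (N+1) → ℝ, f x = ∑ i, x i * f (Pi.single i 1) := by
      intro x
      conv_lhs => rw [← Finset.univ_sum_single x]
      rw [map_sum]
      apply Finset.sum_congr rfl
      intro i _
      have : (Pi.single i (x i) : Fin (N+1) → ℝ) = x i • Pi.single i 1 := by
        rw [← Pi.single_smul]; simp
      rw [this, map_smul, smul_eq_mul]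
    set c : Fin (N+1) → ℝ := fun i => - f (Pi.single i 1) with hc
    set σ := Tuple.sort c
    have hσ : Monotone (c ∘ σ) := Tuple.monotone_sort c
    have hv := hft (fun i => u (σ.symm i)) (subset_convexHull ℝ _ ⟨σ.symm, fun i => rfl⟩)
    set d : Fin (N+1) → ℝ := fun j => x (σ j) - u j with hd
    have hxs : x ∘ σ ∈ phB u (fun _ : Fin (N+1) => 1) := (phB_comp u (fun _ => 1) x σ).2 hx
    have hD : ∀ j, j ≤ N+1 → 0 ≤ ∑ i ∈ phP (N+1) j, d i := by
      intro j hj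
      have h1 := hxs.1 (phP (N+1) j)
      have hcd : ∀ j, j ≤ N+1 → ∑ i ∈ phP (N+1) j, u i = phT u (∑ i ∈ phP (N+1) j, 1) := by
        intro j hj
        rw [phP_sum_range hj]
        have : ∑ i ∈ phP (N+1) j, 1 = j := by
          clear h1
          induction j with
          | zero => simp [phP_zero]
          | succ j ih => rw [phP_sum (by omega), ih (by omega)]
        rw [this]
        unfold phT
        apply Finset.sum_congr rfl
        intro i hi
        rw [phE_of_lt _ _ (by have := Finset.mem_range.1 hi; omega)]
      rw [← hcd j hj] at h1
      simp only [hd, Finset.sum_sub_distrib]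
      simpa using h1
    have hDn : ∑ i, d i = 0 := by
      have h1 := hxs.2
      have h2 := vert.2
      simp only [hd, Finset.sum_sub_distrib]
      simp at h1 h2
      simp [h1, h2]
    have parts := ph_parts (phE (c ∘ σ)) (phE d) N
    have hE : ∀ j, j ≤ N+1 → ∑ i ∈ Finset.range j, phE d i = ∑ i ∈ phP (N+1) j, d i :=
      fun j hj => (phP_sum_range hj d).symm
    rw [hE _ le_rfl, phP_top, hDn] at parts
    have hl : ∑ i ∈ Finset.range (N+1), phE (c ∘ σ) i * phE d i = ∑ i, (c ∘ σ) i * d i := by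
      rw [← phP_top, phP_sum_range le_rfl]
      exact Finset.sum_congr rfl (fun i _ => (phE_mul _ _ _).symm)
    rw [hl] at parts
    have hnn : 0 ≤ ∑ j ∈ Finset.range N, (∑ i ∈ Finset.range (j+1), phE d i) *
        (phE (c ∘ σ) (j+1) - phE (c ∘ σ) j) := by
      apply Finset.sum_nonneg
      intro j hj
      have hj := Finset.mem_range.1 hj
      rw [hE _ (by omega), phE_of_lt _ _ (by omega), phE_of_lt _ _ (by omega)]
      exact mul_nonneg (hD _ (by omega)) (sub_nonneg.2 (hσ (by rw [Fin.le_def]; simp)))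
    have e1 : ∑ i, (c ∘ σ) i * d i = f (fun i => u (σ.symm i)) - f x := by
      rw [hf x, hf (fun i => u (σ.symm i)), 
        ← Equiv.sum_comp σ (fun i => x i * f (Pi.single i 1)),
        ← Equiv.sum_comp σ (fun i => u (σ.symm i) * f (Pi.single i 1)), ← Finset.sum_sub_distrib]
      apply Finset.sum_congr rfl
      intro i _
      simp [hc, hd]; ring
    linarith

/-- slack of an initial segment -/
def phS {n : ℕ} (u : ℕ → ℝ) (w : Fin n → ℕ) (y : Fin n → ℝ) (j : ℕ) : ℝ :=
  ∑ i ∈ phP n j, (w i : ℝ) * y i - phT u (∑ i ∈ phP n j, w i)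

/-- gap -/
def phG {n : ℕ} (y : Fin n → ℝ) (j : ℕ) : ℝ := phE y (j+1) - phE y j

/-- the relation for the identity ordering -/
def phR {N : ℕ} (u : ℕ → ℝ) (p q : Fin (N+1) → ℕ) (y y' : Fin (N+1) → ℝ) : Prop :=
  Monotone y ∧ Monotone y' ∧ ∀ j, j < N → phS u p y (j+1) * phG y' j = phS u q y' (j+1) * phG y j

theorem phR_symm {N : ℕ} {u : ℕ → ℝ} {p q : Fin (N+1) → ℕ} {y y' : Fin (N+1) → ℝ}
    (h : phR u p q y y') : phR u q p y' y :=
  ⟨h.2.1, h.1, fun j hj => (h.2.2 j hj).symm⟩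

theorem phG_nonneg {N : ℕ} {y : Fin (N+1) → ℝ} (hy : Monotone y) (j : ℕ) (hj : j < N) :
    0 ≤ phG y j := by
  unfold phG
  rw [phE_of_lt _ _ (by omega), phE_of_lt _ _ (by omega)]
  exact sub_nonneg.2 (hy (by rw [Fin.le_def]; simp))

theorem phS_nonneg {n : ℕ} {u : ℕ → ℝ} {w : Fin n → ℕ} {y : Fin n → ℝ} (hy : y ∈ phB u w)
    (j : ℕ) : 0 ≤ phS u w y j := sub_nonneg.2 (hy.1 _)

theorem phG_pos {N : ℕ} {u : ℕ → ℝ} (hu : StrictMono u) {w : Fin (N+1) → ℕ} (hw : ∀ i, 0 < w i)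
    {y : Fin (N+1) → ℝ} (hy : y ∈ phB u w) (j : ℕ) (hj : j < N) (h : phS u w y (j+1) = 0) :
    0 < phG y j := by
  unfold phG
  rw [phE_of_lt _ _ (by omega), phE_of_lt _ _ (by omega)]
  refine sub_pos.2 (ph_tight_lt u hu w hw y hy (phP (N+1) (j+1)) (sub_eq_zero.1 h) _ _ ?_ ?_)
  · simp [mem_phP]
  · simp [mem_phP]

theorem phSG_pos {N : ℕ} {u : ℕ → ℝ} (hu : StrictMono u) {w : Fin (N+1) → ℕ} (hw : ∀ i, 0 < w i)
    {y : Fin (N+1) → ℝ} (hy : y ∈ phB u w) (hm : Monotone y) (j : ℕ) (hj : j < N) :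
    0 < phS u w y (j+1) + phG y j := by
  have h1 := phS_nonneg hy (j+1)
  have h2 := phG_nonneg hm j hj
  rcases h1.eq_or_lt with h | h
  · have := phG_pos hu hw hy j hj h.symm
    linarith
  · linarith

theorem phE_cast_pos {N : ℕ} (q : Fin (N+1) → ℕ) (hq : ∀ i, 0 < q i) (i : ℕ) (hi : i ≤ N) :
    0 < phE (fun i => (q i : ℝ)) i := by
  rw [phE_of_lt _ _ (by omega)]; exact_mod_cast hq _

theorem ph_sum_E {n : ℕ} (q y : Fin n → ℝ) (j : ℕ) (hj : j ≤ n) :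
    ∑ i ∈ Finset.range j, phE q i * phE y i = ∑ i ∈ phP n j, q i * y i := by
  rw [phP_sum_range hj]
  exact Finset.sum_congr rfl (fun i _ => (phE_mul _ _ _).symm)

theorem ph_mono_of_step {N : ℕ} (y : Fin (N+1) → ℝ) (h : ∀ j, j < N → phE y j ≤ phE y (j+1)) :
    Monotone y := by
  apply Fin.monotone_iff_le_succ.2
  intro i
  have := h i i.2
  rwa [phE_of_lt _ _ (by omega), phE_of_lt _ _ (by omega)] at this

theorem phR_exists {N : ℕ} {u : ℕ → ℝ} (hu : StrictMono u) {p q : Fin (N+1) → ℕ}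
    (hp : ∀ i, 0 < p i) (hq : ∀ i, 0 < q i) {y : Fin (N+1) → ℝ} (hy : y ∈ phB u p)
    (hm : Monotone y) : ∃ y' ∈ phB u q, phR u p q y y' := by
  set Φ : ℕ → ℝ := fun j => phT u (∑ i ∈ phP (N+1) j, q i) with hΦ
  set Q : ℕ → ℝ := phE (fun i => (q i : ℝ))
  have hQ := phE_cast_pos q hq
  have hα : ∀ j, j < N → 0 ≤ phS u p y (j+1) := fun j _ => phS_nonneg hy _
  have hβ : ∀ j, j < N → 0 ≤ phG y j := fun j hj => phG_nonneg hm j hj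
  have hab : ∀ j, j < N → 0 < phS u p y (j+1) + phG y j := fun j hj => phSG_pos hu hp hy hm j hj
  obtain ⟨z, hz1, hz2⟩ := ph_solve N Q (fun j => phS u p y (j+1)) (phG y) (fun j => Φ (j+1))
    hQ hα hβ hab
  obtain ⟨f1, f2⟩ := ph_feas N Q (fun j => phS u p y (j+1)) (phG y) Φ (phE z) hQ hα hβ hab hz1 hz2
    (by simp [hΦ, phP_zero, phT]) (by
      intro j hj
      have hj1 : j < N + 1 := by omega
      have hj2 : j + 1 < N + 1 := by omega
      simp only [hΦ]
      rw [phP_sum hj2, phP_sum hj1]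
      have q1 : Q j = q ⟨j, hj1⟩ := phE_of_lt _ _ _
      have q2 : Q (j+1) = q ⟨j+1, hj2⟩ := phE_of_lt _ _ _
      have p1 := hq ⟨j, hj1⟩
      have p2 := hq ⟨j+1, hj2⟩
      rw [q1, q2]
      generalize q ⟨j, hj1⟩ = k at *
      generalize q ⟨j+1, hj2⟩ = k' at *
      generalize ∑ i ∈ phP (N+1) j, q i = m
      have h3 := phT_add_le u m k (u (m + k - 1)) (fun j hj => hu.monotone (by omega))
      have h4 := phT_le_add u (m + k) k' (u (m + k)) (fun j hj => hu.monotone (by omega))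
      have c1 : (0:ℝ) < k := by exact_mod_cast p1
      have c2 : (0:ℝ) < k' := by exact_mod_cast p2
      calc _ ≤ u (m + k - 1) := by rw [div_le_iff₀ c1]; linarith
        _ < u (m + k) := hu (by omega)
        _ ≤ _ := by rw [le_div_iff₀ c2]; linarith)
  have hzm := ph_mono_of_step z f2
  have hs : ∀ j, j ≤ N + 1 → ∑ i ∈ Finset.range j, Q i * phE z i =
      ∑ i ∈ phP (N+1) j, (q i : ℝ) * z i := fun j hj => ph_sum_E _ _ j hj
  refine ⟨z, ph_B_of_prefix u hu q z hzm ?_ ?_, hm, hzm, ?_⟩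
  · intro j hj
    rw [← hs j hj]; exact f1 j hj
  · have := hs (N+1) le_rfl
    rw [phP_top] at this
    rw [← this, hz2]
    simp [hΦ, phP_top]
  · intro j hj
    have := hz1 j hj
    rw [hs _ (by omega)] at this
    unfold phG phS at *
    rw [this]; ring

theorem phR_unique {N : ℕ} {u : ℕ → ℝ} (hu : StrictMono u) {p q : Fin (N+1) → ℕ}
    (hp : ∀ i, 0 < p i) (hq : ∀ i, 0 < q i) {y y' y'' : Fin (N+1) → ℝ} (hy : y ∈ phB u p)
    (hy' : y' ∈ phB u q) (hy'' : y'' ∈ phB u q)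
    (h' : phR u p q y y') (h'' : phR u p q y y'') : y' = y'' := by
  have hm := h'.1
  have hα : ∀ j, j < N → 0 ≤ phS u p y (j+1) := fun j _ => phS_nonneg hy _
  have hβ : ∀ j, j < N → 0 ≤ phG y j := fun j hj => phG_nonneg hm j hj
  have hab : ∀ j, j < N → 0 < phS u p y (j+1) + phG y j := fun j hj => phSG_pos hu hp hy hm j hj
  have hs : ∀ j, j ≤ N + 1 → ∑ i ∈ Finset.range j, phE (fun i => (q i : ℝ)) i * (phE y' i - phE y'' i) =
      ∑ i ∈ phP (N+1) j, (q i : ℝ) * y' i - ∑ i ∈ phP (N+1) j, (q i : ℝ) * y'' i := by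
    intro j hj
    rw [← ph_sum_E _ _ j hj, ← ph_sum_E _ _ j hj, ← Finset.sum_sub_distrib]
    exact Finset.sum_congr rfl (fun i _ => by ring)
  have := ph_uniq N (phE (fun i => (q i : ℝ))) (fun j => phS u p y (j+1)) (phG y)
    (fun i => phE y' i - phE y'' i) (phE_cast_pos q hq) hα hβ hab (by
      intro j hj
      rw [hs _ (by omega)]
      have e1 := h'.2.2 j hj
      have e2 := h''.2.2 j hj
      unfold phG phS at *
      linear_combination e1 - e2) (by
      rw [hs _ le_rfl, phP_top, hy'.2, hy''.2, sub_self])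
  ext i
  have := this i (by omega)
  rw [phE_of_lt _ _ i.2, phE_of_lt _ _ i.2] at this
  exact sub_eq_zero.1 this

theorem phR_gap {N : ℕ} {u : ℕ → ℝ} (hu : StrictMono u) {p q : Fin (N+1) → ℕ}
    (hp : ∀ i, 0 < p i) {y y' : Fin (N+1) → ℝ} (hy : y ∈ phB u p)
    (h' : phR u p q y y') (j : ℕ) (hj : j < N) (h : phG y j = 0) : phG y' j = 0 := by
  have e := h'.2.2 j hj
  rw [h, mul_zero] at e
  rcases mul_eq_zero.1 e with h1 | h1
  · have := phG_pos hu hp hy j hj h1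
    linarith
  · exact h1

theorem phR_ties {N : ℕ} {u : ℕ → ℝ} (hu : StrictMono u) {p q : Fin (N+1) → ℕ}
    (hp : ∀ i, 0 < p i) {y y' : Fin (N+1) → ℝ} (hy : y ∈ phB u p)
    (h' : phR u p q y y') (i k : Fin (N+1)) (h : y i = y k) : y' i = y' k := by
  have main : ∀ d i : ℕ, i + d ≤ N → phE y i = phE y (i+d) → phE y' i = phE y' (i+d) := by
    intro d
    induction d with
    | zero => intro i _ _; rfl
    | succ d ih =>
      intro i hid he
      have g := phG_nonneg h'.1 (i+d) (by omega)
      have m : phE y i ≤ phE y (i+d) := by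
        rw [phE_of_lt _ _ (by omega), phE_of_lt _ _ (by omega)]
        exact h'.1 (by rw [Fin.le_def]; simp)
      have g0 : phG y (i+d) = 0 := by
        unfold phG at *
        rw [← add_assoc] at he
        linarith
      have g1 := phR_gap hu hp hy h' (i+d) (by omega) g0
      have := ih i (by omega) (by
        unfold phG at g0
        rw [← add_assoc] at he
        linarith)
      unfold phG at g1
      rw [← add_assoc]
      linarith
  have sub : ∀ i k : Fin (N+1), i ≤ k → y i = y k → y' i = y' k := by
    intro i k hik h
    rw [Fin.le_def] at hik
    have e : (i:ℕ) + (k - i) = k := by omega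
    have := main (k - i) i (by omega)
    rw [e, phE_of_lt _ _ i.2, phE_of_lt _ _ k.2, phE_of_lt _ _ i.2, phE_of_lt _ _ k.2] at this
    exact this h
  rcases le_total i k with hik | hik
  · exact sub i k hik h
  · exact (sub k i hik h.symm).symm

theorem phR_tight {N : ℕ} {u : ℕ → ℝ} (hu : StrictMono u) {p q : Fin (N+1) → ℕ}
    (hp : ∀ i, 0 < p i) {y y' : Fin (N+1) → ℝ} (hy : y ∈ phB u p)
    (hy' : y' ∈ phB u q) (h' : phR u p q y y') (A : Finset (Fin (N+1)))
    (hA : ∑ i ∈ A, (p i : ℝ) * y i = phT u (∑ i ∈ A, p i)) :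
    ∑ i ∈ A, (q i : ℝ) * y' i = phT u (∑ i ∈ A, q i) := by
  by_cases hu' : A = Finset.univ
  · rw [hu']; exact hy'.2
  have hne : (Finset.univ \ A).Nonempty := by
    rw [Finset.sdiff_nonempty]
    intro h; exact hu' (Finset.univ_subset_iff.1 h)
  set k := (Finset.univ \ A).min' hne with hk
  have hkA : k ∉ A := (Finset.mem_sdiff.1 (Finset.min'_mem _ hne)).2
  have hAP : A = phP (N+1) k := by
    ext i
    rw [mem_phP, ← Fin.lt_def]
    constructor
    · intro hi
      exact h'.1.reflect_lt (ph_tight_lt u hu p hp y hy A hA i k hi hkA)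
    · intro hi
      by_contra hiA
      have := Finset.min'_le (Finset.univ \ A) i (by simp [hiA])
      exact absurd hi (not_lt.2 this)
  rw [hAP] at hA ⊢
  rcases Nat.eq_zero_or_pos (k : ℕ) with h0 | h0
  · rw [h0]; simp [phP_zero, phT]
  · obtain ⟨j, hj⟩ := Nat.exists_eq_succ_of_ne_zero h0.ne'
    have hjN : j < N := by have := k.2; omega
    rw [hj] at hA ⊢
    have hS : phS u p y (j+1) = 0 := sub_eq_zero.2 hA
    have e := h'.2.2 j hjN
    rw [hS, zero_mul] at e
    rcases mul_eq_zero.1 e.symm with h1 | h1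
    · exact sub_eq_zero.1 h1
    · have := phG_pos hu hp hy j hjN hS
      linarith

/-- the relation -/
def phRel {N : ℕ} (u : ℕ → ℝ) (p q : Fin (N+1) → ℕ) (y y' : Fin (N+1) → ℝ) : Prop :=
  ∃ σ : Equiv.Perm (Fin (N+1)), phR u (p ∘ σ) (q ∘ σ) (y ∘ σ) (y' ∘ σ)

theorem phRel_symm {N : ℕ} {u : ℕ → ℝ} {p q : Fin (N+1) → ℕ} {y y' : Fin (N+1) → ℝ}
    (h : phRel u p q y y') : phRel u q p y' y := by
  obtain ⟨σ, h⟩ := h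
  exact ⟨σ, phR_symm h⟩

theorem phRel_exists {N : ℕ} {u : ℕ → ℝ} (hu : StrictMono u) {p q : Fin (N+1) → ℕ}
    (hp : ∀ i, 0 < p i) (hq : ∀ i, 0 < q i) {y : Fin (N+1) → ℝ} (hy : y ∈ phB u p) :
    ∃ y' ∈ phB u q, phRel u p q y y' := by
  set σ := Tuple.sort y
  obtain ⟨z, hz, hR⟩ := phR_exists hu (p := p ∘ σ) (q := q ∘ σ) (fun i => hp _) (fun i => hq _)
    ((phB_comp u p y σ).2 hy) (Tuple.monotone_sort y)
  have e : (z ∘ σ.symm) ∘ σ = z := by ext i; simp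
  refine ⟨z ∘ σ.symm, ?_, σ, ?_⟩
  · rw [← phB_comp u q _ σ, e]; exact hz
  · rw [e]; exact hR

theorem phS_comp {n : ℕ} (u : ℕ → ℝ) (w : Fin n → ℕ) (y : Fin n → ℝ) (σ : Equiv.Perm (Fin n))
    (j : ℕ) : phS u (w ∘ σ) (y ∘ σ) j =
      ∑ i ∈ (phP n j).map σ.toEmbedding, (w i : ℝ) * y i
        - phT u (∑ i ∈ (phP n j).map σ.toEmbedding, w i) := by
  simp [phS, Finset.sum_map]

theorem ph_seg {N : ℕ} (y : Fin (N+1) → ℝ) (σ : Equiv.Perm (Fin (N+1))) (hσ : Monotone (y ∘ σ))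
    (j : ℕ) (hj : j < N) (hg : phG (y ∘ σ) j ≠ 0) :
    (phP (N+1) (j+1)).map σ.toEmbedding =
      Finset.univ.filter (fun i => y i ≤ phE (y ∘ σ) j) := by
  have hg' : 0 < phG (y ∘ σ) j := lt_of_le_of_ne (phG_nonneg hσ j hj) hg.symm
  unfold phG at hg'
  rw [phE_of_lt _ _ (by omega), phE_of_lt _ _ (by omega)] at hg'
  rw [phE_of_lt _ _ (by omega)]
  ext i
  obtain ⟨i, rfl⟩ := σ.surjective i
  simp only [Finset.mem_map_equiv, Equiv.symm_apply_apply, mem_phP, Finset.mem_filter,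
    Finset.mem_univ, true_and]
  constructor
  · intro h
    exact hσ (show i ≤ ⟨j, by omega⟩ by rw [Fin.le_def]; simp; omega)
  · intro h
    by_contra hn
    have : (y ∘ σ) ⟨j+1, by omega⟩ ≤ (y ∘ σ) i := hσ (by rw [Fin.le_def]; simp; omega)
    simp only [Function.comp] at *
    linarith

theorem phRel_unique {N : ℕ} {u : ℕ → ℝ} (hu : StrictMono u) {p q : Fin (N+1) → ℕ}
    (hp : ∀ i, 0 < p i) (hq : ∀ i, 0 < q i) {y y' y'' : Fin (N+1) → ℝ} (hy : y ∈ phB u p)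
    (hy' : y' ∈ phB u q) (hy'' : y'' ∈ phB u q)
    (h' : phRel u p q y y') (h'' : phRel u p q y y'') : y' = y'' := by
  obtain ⟨σ, h1⟩ := h'
  obtain ⟨τ, h2⟩ := h''
  have e : y ∘ σ = y ∘ τ := Tuple.unique_monotone h1.1 h2.1
  have ties : ∀ i k, y i = y k → y'' i = y'' k := by
    intro i k hik
    have := phR_ties hu (fun i => hp (τ i)) ((phB_comp u p y τ).2 hy) h2 (τ.symm i) (τ.symm k)
      (by simpa using hik)
    simpa using this
  have e2 : y'' ∘ σ = y'' ∘ τ := by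
    ext j
    exact ties _ _ (congrFun e j)
  have h3 : phR u (p ∘ σ) (q ∘ σ) (y ∘ σ) (y'' ∘ σ) := by
    refine ⟨h1.1, by rw [e2]; exact h2.2.1, ?_⟩
    intro j hj
    by_cases hg : phG (y ∘ σ) j = 0
    · have : phG (y'' ∘ τ) j = 0 := phR_gap hu (fun i => hp (τ i)) ((phB_comp u p y τ).2 hy) h2 j hj
        (by rw [← e]; exact hg)
      rw [hg, e2, this]; simp
    · have s1 := ph_seg y σ h1.1 j hj hg
      have s2 := ph_seg y τ h2.1 j hj (by rw [← e]; exact hg)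
      rw [← e, ← s1] at s2
      have := h2.2.2 j hj
      rw [phS_comp, phS_comp, s2] at this
      rw [phS_comp, phS_comp, e2, e]
      exact this
  have := phR_unique hu (fun i => hp (σ i)) (fun i => hq (σ i)) ((phB_comp u p y σ).2 hy)
    ((phB_comp u q y' σ).2 hy') ((phB_comp u q y'' σ).2 hy'') h1 h3
  ext i
  have := congrFun this (σ.symm i)
  simpa using this

theorem phRel_tight {N : ℕ} {u : ℕ → ℝ} (hu : StrictMono u) {p q : Fin (N+1) → ℕ}
    (hp : ∀ i, 0 < p i) {y y' : Fin (N+1) → ℝ} (hy : y ∈ phB u p)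
    (hy' : y' ∈ phB u q) (h' : phRel u p q y y') (A : Finset (Fin (N+1)))
    (hA : ∑ i ∈ A, (p i : ℝ) * y i = phT u (∑ i ∈ A, p i)) :
    ∑ i ∈ A, (q i : ℝ) * y' i = phT u (∑ i ∈ A, q i) := by
  obtain ⟨σ, h⟩ := h'
  have := phR_tight hu (fun i => hp (σ i)) ((phB_comp u p y σ).2 hy)
    ((phB_comp u q y' σ).2 hy') h (A.map σ.symm.toEmbedding) (by simpa [Finset.sum_map] using hA)
  simpa [Finset.sum_map] using this

theorem phE_continuous {n : ℕ} (i : ℕ) : Continuous (fun y : Fin n → ℝ => phE y i) := by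
  unfold phE; split <;> fun_prop

theorem phRel_closed {N : ℕ} (u : ℕ → ℝ) (p q : Fin (N+1) → ℕ) :
    IsClosed {x : (Fin (N+1) → ℝ) × (Fin (N+1) → ℝ) | phRel u p q x.1 x.2} := by
  have hG : ∀ j, Continuous (fun y : Fin (N+1) → ℝ => phG y j) := fun j =>
    (phE_continuous _).sub (phE_continuous _)
  have hS : ∀ w : Fin (N+1) → ℕ, ∀ j, Continuous (fun y : Fin (N+1) → ℝ => phS u w y j) := by
    intro w j; unfold phS; fun_prop
  have hR : ∀ p q, IsClosed {x : (Fin (N+1) → ℝ) × (Fin (N+1) → ℝ) | phR u p q x.1 x.2} := by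
    intro p q
    have hm : IsClosed {y : Fin (N+1) → ℝ | Monotone y} := by
      have : {y : Fin (N+1) → ℝ | Monotone y} = ⋂ i, ⋂ j, ⋂ (_ : i ≤ j), {y | y i ≤ y j} := by
        ext y; simp [Monotone]
      rw [this]
      exact isClosed_iInter fun i => isClosed_iInter fun j => isClosed_iInter fun _ =>
        isClosed_le (by fun_prop) (by fun_prop)
    refine (hm.preimage continuous_fst).inter ((hm.preimage continuous_snd).inter ?_)
    have : {x : (Fin (N+1) → ℝ) × (Fin (N+1) → ℝ) | ∀ j, j < N →
        phS u p x.1 (j+1) * phG x.2 j = phS u q x.2 (j+1) * phG x.1 j} =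
        ⋂ j, ⋂ (_ : j < N), {x | phS u p x.1 (j+1) * phG x.2 j = phS u q x.2 (j+1) * phG x.1 j} := by
      ext x; simp
    change IsClosed {x : (Fin (N+1) → ℝ) × (Fin (N+1) → ℝ) | ∀ j, j < N →
        phS u p x.1 (j+1) * phG x.2 j = phS u q x.2 (j+1) * phG x.1 j}
    rw [this]
    refine isClosed_iInter fun j => isClosed_iInter fun _ => isClosed_eq ?_ ?_
    · exact ((hS p _).comp continuous_fst).mul ((hG j).comp continuous_snd)
    · exact ((hS q _).comp continuous_snd).mul ((hG j).comp continuous_fst)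
  have : {x : (Fin (N+1) → ℝ) × (Fin (N+1) → ℝ) | phRel u p q x.1 x.2} =
      ⋃ σ : Equiv.Perm (Fin (N+1)), (fun x : (Fin (N+1) → ℝ) × (Fin (N+1) → ℝ) =>
        (x.1 ∘ σ, x.2 ∘ σ)) ⁻¹' {x | phR u (p ∘ σ) (q ∘ σ) x.1 x.2} := by
    ext x; simp [phRel]
  rw [this]
  refine isClosed_iUnion_of_finite fun σ => (hR _ _).preimage ?_
  fun_prop

theorem ph_continuous_of_graph {X Y : Type*} [TopologicalSpace X] [TopologicalSpace Y]
    [CompactSpace Y] (f : X → Y) (h : IsClosed {x : X × Y | f x.1 = x.2}) : Continuous f := by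
  rw [continuous_iff_isClosed]
  intro C hC
  have : f ⁻¹' C = Prod.fst '' ({x : X × Y | f x.1 = x.2} ∩ Prod.snd ⁻¹' C) := by
    ext x
    constructor
    · intro hx
      exact ⟨(x, f x), ⟨rfl, hx⟩, rfl⟩
    · rintro ⟨⟨x', z⟩, ⟨h1, h2⟩, rfl⟩
      have h1 : f x' = z := h1
      have h2 : z ∈ C := h2
      change f x' ∈ C
      rw [h1]; exact h2
  rw [this]
  exact isClosedMap_fst_of_compactSpace _ (h.inter (hC.preimage continuous_snd))

theorem ph_homeo {N : ℕ} {u : ℕ → ℝ} (hu : StrictMono u) {p q : Fin (N+1) → ℕ}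
    (hp : ∀ i, 0 < p i) (hq : ∀ i, 0 < q i) :
    ∃ φ : ↥(phB u p) ≃ₜ ↥(phB u q), ∀ (y : ↥(phB u p)) (A : Finset (Fin (N+1))),
      (∑ i ∈ A, (p i : ℝ) * (y : Fin (N+1) → ℝ) i = phT u (∑ i ∈ A, p i)) ↔
      (∑ i ∈ A, (q i : ℝ) * (φ y : Fin (N+1) → ℝ) i = phT u (∑ i ∈ A, q i)) := by
  have cp : CompactSpace ↥(phB u p) := isCompact_iff_compactSpace.1 (phB_compact u p hp)
  have cq : CompactSpace ↥(phB u q) := isCompact_iff_compactSpace.1 (phB_compact u q hq)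
  have ex1 : ∀ y : ↥(phB u p), ∃ z : ↥(phB u q), phRel u p q y z := by
    intro y
    obtain ⟨z, hz, h⟩ := phRel_exists hu hp hq y.2
    exact ⟨⟨z, hz⟩, h⟩
  have ex2 : ∀ y : ↥(phB u q), ∃ z : ↥(phB u p), phRel u q p y z := by
    intro y
    obtain ⟨z, hz, h⟩ := phRel_exists hu hq hp y.2
    exact ⟨⟨z, hz⟩, h⟩
  choose f hf using ex1
  choose g hg using ex2
  have hfu : ∀ y z, phRel u p q (y : ↥(phB u p)) (z : ↥(phB u q)) → f y = z := by
    intro y z h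
    exact Subtype.ext (phRel_unique hu hp hq y.2 (f y).2 z.2 (hf y) h)
  let e : ↥(phB u p) ≃ ↥(phB u q) :=
    { toFun := f
      invFun := g
      left_inv := fun y => Subtype.ext
        (phRel_unique hu hq hp (f y).2 (g (f y)).2 y.2 (hg _) (phRel_symm (hf y)))
      right_inv := fun z => hfu _ _ (phRel_symm (hg z)) }
  have hc : Continuous e := by
    apply ph_continuous_of_graph
    have : {x : ↥(phB u p) × ↥(phB u q) | e x.1 = x.2} =
        (fun x : ↥(phB u p) × ↥(phB u q) =>
          ((x.1 : Fin (N+1) → ℝ), (x.2 : Fin (N+1) → ℝ))) ⁻¹'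
          {x | phRel u p q x.1 x.2} := by
      ext x
      constructor
      · intro h
        have h : f x.1 = x.2 := h
        change phRel u p q x.1 x.2
        rw [← h]; exact hf _
      · intro h
        exact hfu _ _ h
    rw [this]
    exact (phRel_closed u p q).preimage (by fun_prop)
  refine ⟨hc.homeoOfEquivCompactToT2, fun y A => ⟨fun h => ?_, fun h => ?_⟩⟩
  · exact phRel_tight hu hp y.2 (f y).2 (hf y) A h
  · exact phRel_tight hu hq (f y).2 y.2 (phRel_symm (hf y)) A h

/-- the weights -/
def phW {n : ℕ} (a : Fin n) (i : Fin n) : ℕ := if i = a then 2 else 1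

theorem phW_pos {n : ℕ} (a i : Fin n) : 0 < phW a i := by unfold phW; split <;> omega

/-- preimage of a set -/
def phD {n : ℕ} (b : Fin (n+1)) (C : Finset (Fin (n+1))) : Finset (Fin n) :=
  Finset.univ.filter (fun i => b.succAbove i ∈ C)

theorem phD_sum {M : Type*} [AddCommMonoid M] {n : ℕ} (b : Fin (n+1)) (a : Fin n)
    (C : Finset (Fin (n+1))) (hC : b.succAbove a ∈ C ↔ b ∈ C) (g : Fin (n+1) → M)
    (hg : g (b.succAbove a) = g b) :
    ∑ i ∈ C, g i = ∑ i ∈ phD b C, phW a i • g (b.succAbove i) := by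
  have h1 : ∑ i ∈ C, g i = ∑ i, if i ∈ C then g i else 0 := by simp
  rw [h1, Fin.sum_univ_succAbove _ b]
  have h2 : ∀ i, phW a i • g (b.succAbove i) = g (b.succAbove i) + if i = a then g b else 0 := by
    intro i
    unfold phW
    split_ifs with h
    · rw [h, two_nsmul, hg]
    · simp
  simp only [h2, Finset.sum_add_distrib]
  unfold phD
  rw [add_comm, Finset.sum_filter]
  congr 1
  rw [Finset.sum_ite_eq']
  simp [hC]

theorem phD_surj {n : ℕ} (b : Fin (n+1)) (a : Fin n) (A : Finset (Fin n)) :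
    ∃ C : Finset (Fin (n+1)), (b.succAbove a ∈ C ↔ b ∈ C) ∧ phD b C = A := by
  refine ⟨if a ∈ A then insert b (A.map b.succAboveEmb)
    else A.map b.succAboveEmb, ?_, ?_⟩
  · split_ifs with h
    · simp [h]
    · simp [h]
  · ext i
    unfold phD
    split_ifs with h
    · simp [Fin.succAbove_ne]
    · simp

theorem phB_one {n : ℕ} (u : ℕ → ℝ) (x : Fin n → ℝ) :
    x ∈ phB u (fun _ : Fin n => 1) ↔ (∀ A : Finset (Fin n), phT u A.card ≤ ∑ i ∈ A, x i) ∧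
      ∑ i, x i = phT u n := by
  simp [phB]

theorem phD_tight {n : ℕ} (u : ℕ → ℝ) (b : Fin (n+1)) (a : Fin n)
    (x : Fin (n+1) → ℝ) (hx : x (b.succAbove a) = x b)
    (C : Finset (Fin (n+1))) (hC : b.succAbove a ∈ C ↔ b ∈ C) :
    ∑ i ∈ C, x i = ∑ i ∈ phD b C, (phW a i : ℝ) * x (b.succAbove i) ∧
      C.card = ∑ i ∈ phD b C, phW a i := by
  constructor
  · simpa using phD_sum b a C hC x hx
  · simpa using phD_sum b a C hC (fun _ => (1:ℕ)) rfl

theorem phB_restrict {n : ℕ} (u : ℕ → ℝ) (hu : StrictMono u) (b : Fin (n+1)) (a : Fin n)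
    (x : Fin (n+1) → ℝ) (hx : x (b.succAbove a) = x b) :
    x ∈ phB u (fun _ : Fin (n+1) => 1) ↔ (fun i => x (b.succAbove i)) ∈ phB u (phW a) := by
  rw [phB_one]
  have htop := phD_tight u b a x hx Finset.univ (by simp)
  have hD : phD b Finset.univ = Finset.univ := by simp [phD]
  rw [hD] at htop
  simp only [Finset.card_univ, Fintype.card_fin] at htop
  have sym : (∀ A, phT u (∑ i ∈ A, phW a i) ≤ ∑ i ∈ A, (phW a i : ℝ) * x (b.succAbove i)) →
      ∀ C : Finset (Fin (n+1)), (b.succAbove a ∈ C ↔ b ∈ C) → phT u C.card ≤ ∑ i ∈ C, x i := by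
    intro h C hC
    obtain ⟨h1, h2⟩ := phD_tight u b a x hx C hC
    rw [h1, h2]; exact h _
  constructor
  · rintro ⟨h1, h2⟩
    refine ⟨fun A => ?_, ?_⟩
    · obtain ⟨C, hC, rfl⟩ := phD_surj b a A
      obtain ⟨e1, e2⟩ := phD_tight u b a x hx C hC
      rw [← e1, ← e2]; exact h1 C
    · rw [← htop.1, ← htop.2]; exact h2
  · rintro ⟨h1, h2⟩
    have sym := sym h1
    refine ⟨fun C => ?_, by rw [htop.1, htop.2]; exact h2⟩
    by_cases hC : b.succAbove a ∈ C ↔ b ∈ C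
    · exact sym C hC
    · have main : ∀ c d : Fin (n+1), c ∈ C → d ∉ C → x c = x d →
          phT u (C.erase c).card ≤ ∑ i ∈ C.erase c, x i →
          phT u (insert d C).card ≤ ∑ i ∈ insert d C, x i → phT u C.card ≤ ∑ i ∈ C, x i := by
        intro c d hc hd hcd g1 g2
        rw [Finset.sum_insert hd, Finset.card_insert_of_notMem hd] at g2
        have e := Finset.add_sum_erase C x hc
        have e' := Finset.card_erase_add_one hc
        rw [← e'] at g2 ⊢
        simp only [phT, Finset.sum_range_succ] at *
        have := hu (show (C.erase c).card < (C.erase c).card + 1 by omega)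
        linarith
      have hne : b.succAbove a ≠ b := Fin.succAbove_ne b a
      by_cases hb : b ∈ C
      · have ha : b.succAbove a ∉ C := by tauto
        exact main _ _ hb ha hx.symm (sym _ (by simp [ha])) (sym _ (by simp [hb]))
      · have ha : b.succAbove a ∈ C := by tauto
        exact main _ _ ha hb hx (sym _ (by simp [hb])) (sym _ (by simp [ha]))

theorem reduceIdx_succAbove {r : ℕ} (b : Fin (r+2)) (i : Fin (r+1)) :
    reduceIdx b (b.succAbove i) = i := by
  unfold reduceIdx Fin.succAbove
  ext
  simp only [Fin.lt_def]
  by_cases h : (i : ℕ) < b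
  · simp [h]
  · have h' : ¬ ((i : ℕ) + 1 < b) := by omega
    simp [h, h']

theorem mem_reducePartition {r k : ℕ} (b : Fin (r+2)) (Q : Fin (k+1) → Finset (Fin (r+2)))
    (j : Fin (k+1)) (i : Fin (r+1)) : i ∈ reducePartition b Q j ↔ b.succAbove i ∈ Q j := by
  unfold reducePartition
  simp only [Finset.mem_image, Finset.mem_erase]
  constructor
  · rintro ⟨x, ⟨hb, hx⟩, rfl⟩
    obtain ⟨i, rfl⟩ := Fin.exists_succAbove_eq hb
    rw [reduceIdx_succAbove]; exact hx
  · intro h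
    exact ⟨_, ⟨Fin.succAbove_ne b i, h⟩, reduceIdx_succAbove b i⟩

/-- union of the first blocks -/
def phU {n k : ℕ} (Q : Fin (k+1) → Finset (Fin n)) (j : Fin (k+1)) : Finset (Fin n) :=
  (Finset.univ.filter (fun j' => j' ≤ j)).biUnion Q

theorem mem_phU {n k : ℕ} (Q : Fin (k+1) → Finset (Fin n)) (j : Fin (k+1)) (i : Fin n) :
    i ∈ phU Q j ↔ ∃ j', j' ≤ j ∧ i ∈ Q j' := by simp [phU]

theorem ph_face {n k : ℕ} (u : ℕ → ℝ) (Q : Fin (k+1) → Finset (Fin n))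
    (hQ : ∀ j j', j ≠ j' → Disjoint (Q j) (Q j')) (x : Fin n → ℝ) :
    x ∈ partitionFace u Q ↔ x ∈ permutohedron n u ∧
      ∀ j, ∑ i ∈ phU Q j, x i = phT u (phU Q j).card := by
  have hc : ∀ j, (phU Q j).card = ∑ j' ∈ Finset.univ.filter (fun j' => j' ≤ j), (Q j').card := by
    intro j
    exact Finset.card_biUnion (fun a _ b _ h => hQ a b h)
  simp only [hc]
  unfold partitionFace phT phU
  simp only [Set.mem_inter_iff, Set.mem_iInter]
  rfl

/-- For a strictly increasing sequence of positive integers `s_1 < ⋯ < s_r`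
with `r ≥ 2` (here the ambient dimension is `r+2`), and `a ≠ b`, there is a homeomorphism `ψ`
from `Π_S ∩ {x_a = x_b}` onto `Π_{(s_1,…,s_{r-1})}` such that: (i) faces of ordered partitions
separating `a` and `b` miss the hyperplane `{x_a = x_b}`; (ii) if `a, b` lie in a common block,
`ψ` carries `Π_𝔭 ∩ {x_a = x_b}` exactly onto the face of the smaller permutohedron
associated to the `b`-reduction `𝔭'` of `𝔭` (hence homeomorphically, `ψ` being a
homeomorphism). -/
theorem permutohedron_inter_hyperplane (r : ℕ) (s : ℕ → ℕ)
    (hmono : StrictMono s) (hpos : ∀ i, 0 < s i)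
    (a b : Fin (r + 2)) (hab : a ≠ b) :
    ∃ ψ : ↥(permutohedron (r + 2) (fun i => (s i : ℝ)) ∩
            {x : Fin (r + 2) → ℝ | x a = x b}) ≃ₜ
          ↥(permutohedron (r + 1) (fun i => (s i : ℝ))),
      (∀ (k : ℕ) (Q : Fin (k + 1) → Finset (Fin (r + 2))), IsOrderedPartition Q →
        (∀ j, ¬(a ∈ Q j ∧ b ∈ Q j)) →
        partitionFace (fun i => (s i : ℝ)) Q ∩ {x : Fin (r + 2) → ℝ | x a = x b} = ∅) ∧
      (∀ (k : ℕ) (Q : Fin (k + 1) → Finset (Fin (r + 2))), IsOrderedPartition Q →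
        (∃ j, a ∈ Q j ∧ b ∈ Q j) →
        ∀ x : ↥(permutohedron (r + 2) (fun i => (s i : ℝ)) ∩
            {x : Fin (r + 2) → ℝ | x a = x b}),
          (x : Fin (r + 2) → ℝ) ∈ partitionFace (fun i => (s i : ℝ)) Q ↔
            (ψ x : Fin (r + 1) → ℝ) ∈
              partitionFace (fun i => (s i : ℝ)) (reducePartition b Q)) := by
  set u : ℕ → ℝ := fun i => (s i : ℝ) with hu'
  have hu : StrictMono u := fun i j h => by
    have := hmono h
    simp only [hu']; exact_mod_cast this
  obtain ⟨a', rfl⟩ := Fin.exists_succAbove_eq hab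
  have rad2 : permutohedron (r + 2) u = phB u (fun _ => 1) := ph_rado u hu
  have rad1 : permutohedron (r + 1) u = phB u (fun _ => 1) := ph_rado u hu
  obtain ⟨φ, hφ⟩ := ph_homeo hu (phW_pos a') (fun _ : Fin (r+1) => Nat.one_pos)
  let e1 : ↥(permutohedron (r + 2) u ∩ {x : Fin (r + 2) → ℝ | x (b.succAbove a') = x b}) ≃ₜ
      ↥(phB u (phW a')) :=
    { toFun := fun x => ⟨fun i => x.1 (b.succAbove i),
        (phB_restrict u hu b a' x.1 x.2.2).1 (rad2 ▸ x.2.1)⟩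
      invFun := fun y => ⟨b.insertNth (α := fun _ => ℝ) (y.1 a') y.1, by
        have hx : (b.insertNth (α := fun _ => ℝ) (y.1 a') y.1 : Fin (r+2) → ℝ) (b.succAbove a') =
          (b.insertNth (α := fun _ => ℝ) (y.1 a') y.1 : Fin (r+2) → ℝ) b := by simp
        refine ⟨?_, hx⟩
        rw [rad2, phB_restrict u hu b a' _ hx]
        simpa using y.2⟩
      left_inv := by
        intro x
        apply Subtype.ext
        ext i
        rcases Fin.eq_self_or_eq_succAbove b i with h | ⟨j, h⟩
        · rw [h]
          simpa using x.2.2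
        · rw [h]; simp
      right_inv := by
        intro y
        apply Subtype.ext
        ext i
        simp
      continuous_toFun := by
        refine Continuous.subtype_mk ?_ _
        exact continuous_pi fun i => (continuous_apply _).comp continuous_subtype_val
      continuous_invFun := by
        refine Continuous.subtype_mk ?_ _
        refine continuous_pi fun i => ?_
        rcases Fin.eq_self_or_eq_succAbove b i with h | ⟨j, h⟩
        · rw [h]; simp only [Fin.insertNth_apply_same]; exact (continuous_apply _).comp continuous_subtype_val
        · rw [h]; simp only [Fin.insertNth_apply_succAbove]; exact (continuous_apply _).comp continuous_subtype_val }
  refine ⟨(e1.trans φ).trans (Homeomorph.setCongr rad1.symm), ?_, ?_⟩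
  · intro k Q hQ hsep
    ext x
    simp only [Set.mem_inter_iff, Set.mem_empty_iff_false, iff_false, not_and]
    intro hx hxab
    have hxab : x (b.succAbove a') = x b := hxab
    rw [ph_face u Q hQ.2.1, rad2] at hx
    obtain ⟨hxB, ht⟩ := hx
    have cover : ∀ i, ∃ j, i ∈ Q j := by
      intro i
      have := Finset.mem_univ i
      rw [← hQ.2.2] at this
      simpa using this
    have main : ∀ c d : Fin (r+2), ∀ j j', c ∈ Q j → d ∈ Q j' → j < j' → x c < x d := by
      intro c d j j' hc hd hjj
      refine ph_tight_lt u hu _ (fun _ => Nat.one_pos) x hxB (phU Q j) ?_ c d ?_ ?_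
      · simpa using ht j
      · exact (mem_phU _ _ _).2 ⟨j, le_rfl, hc⟩
      · rw [mem_phU]
        rintro ⟨l, hl, hdl⟩
        have : l ≠ j' := by rintro rfl; exact absurd hl (not_le.2 hjj)
        exact Finset.disjoint_left.1 (hQ.2.1 _ _ this) hdl hd
    obtain ⟨j, hj⟩ := cover (b.succAbove a')
    obtain ⟨j', hj'⟩ := cover b
    rcases lt_trichotomy j j' with h | h | h
    · exact absurd hxab (main _ _ _ _ hj hj' h).ne
    · subst h; exact hsep j ⟨hj, hj'⟩
    · exact absurd hxab (main _ _ _ _ hj' hj h).ne'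
  · intro k Q hQ hsame x
    obtain ⟨j0, ha0, hb0⟩ := hsame
    have hred : ∀ j j', j ≠ j' → Disjoint (reducePartition b Q j) (reducePartition b Q j') := by
      intro j j' h
      rw [Finset.disjoint_left]
      intro i hi hi'
      rw [mem_reducePartition] at hi hi'
      exact Finset.disjoint_left.1 (hQ.2.1 _ _ h) hi hi'
    rw [ph_face u Q hQ.2.1, ph_face u _ hred]
    have hU : ∀ j, phU (reducePartition b Q) j = phD b (phU Q j) := by
      intro j
      ext i
      simp [mem_phU, phD, mem_reducePartition]
    have uniq : ∀ c, c ∈ Q j0 → ∀ j, c ∈ phU Q j ↔ j0 ≤ j := by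
      intro c hc j
      rw [mem_phU]
      constructor
      · rintro ⟨l, hl, hcl⟩
        have : l = j0 := by
          by_contra hne
          exact Finset.disjoint_left.1 (hQ.2.1 _ _ hne) hcl hc
        rwa [this] at hl
      · intro h; exact ⟨j0, h, hc⟩
    have hz : (((e1.trans φ).trans (Homeomorph.setCongr rad1.symm)) x : Fin (r+1) → ℝ) =
        (φ (e1 x) : Fin (r+1) → ℝ) := rfl
    refine and_congr ?_ (forall_congr' fun j => ?_)
    · exact iff_of_true x.2.1 (Subtype.property _)
    · rw [hz, hU]
      obtain ⟨t1, t2⟩ := phD_tight u b a' x.1 x.2.2 (phU Q j)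
        (by rw [uniq _ ha0, uniq _ hb0])
      rw [t1, t2]
      have := hφ (e1 x) (phD b (phU Q j))
      have hx1 : ∀ i, (e1 x : Fin (r+1) → ℝ) i = x.1 (b.succAbove i) := fun _ => rfl
      simp only [hx1] at this
      simpa using this
end

section
/- Let S = (s_1 < ⋯ < s_r) be a strictly increasing sequence of positive integers. Let A_1,…,A_w ⊆ {1,…,r} be pairwise disjoint subsets with |A_j| = k_j, and let H = {x ∈ ℝ^r : x_i = x_{i'} whenever i and i' lie in the same set A_j}. Set K = ∑_{j=1}^{w} (k_j − 1). Then the intersection Π_S ∩ H is homeomorphic to the permutohedron Π_{(s_1,…,s_{r−K})} ⊂ ℝ^{r−K}; in particular Π_S ∩ H is nonempty. -/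
open Metric in
lemma homeo_ball {E : Type*} [NormedAddCommGroup E] [NormedSpace ℝ E] [FiniteDimensional ℝ E]
    (P : Set E) (hP : IsCompact P) (hc : Convex ℝ P) (U : Submodule ℝ E) (c : E)
    (hU : ∀ p ∈ P, p - c ∈ U) (ε : ℝ) (hε : 0 < ε) (hb : ∀ u ∈ U, ‖u‖ < ε → c + u ∈ P)
    (d : ℕ) (hd : Module.finrank ℝ U = d) :
    Nonempty (P ≃ₜ closedBall (0 : EuclideanSpace ℝ (Fin d)) 1) := by
  let L : EuclideanSpace ℝ (Fin d) ≃L[ℝ] U :=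
    ContinuousLinearEquiv.ofFinrankEq (by simp [hd])
  let Q : Set (EuclideanSpace ℝ (Fin d)) := {y | c + (L y : E) ∈ P}
  let e : P ≃ₜ Q :=
    { toFun := fun p => ⟨L.symm ⟨p - c, hU p p.2⟩, by simp [Q]⟩
      invFun := fun q => ⟨c + (L q : E), q.2⟩
      left_inv := fun p => by simp
      right_inv := fun q => by simp
      continuous_toFun := by fun_prop
      continuous_invFun := by fun_prop }
  have hQc : IsCompact Q := by
    have := isCompact_iff_compactSpace.mp hP
    have := e.compactSpace
    exact isCompact_iff_compactSpace.mpr inferInstance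
  have hQconv : Convex ℝ Q := by
    intro x hx y hy a b ha hb hab
    have := hc hx hy ha hb hab
    have h2 : c + (L (a • x + b • y) : E) = a • (c + (L x : E)) + b • (c + (L y : E)) := by
      have : c = (a + b) • c := by rw [hab, one_smul]
      simp only [map_add, map_smul, Submodule.coe_add, Submodule.coe_smul, smul_add]
      nth_rewrite 1 [this]
      module
    show c + (L (a • x + b • y) : E) ∈ P
    rw [h2]; exact this
  have hint : (interior Q).Nonempty := by
    refine ⟨0, mem_interior.mpr ⟨{y | ‖(L y : E)‖ < ε}, fun y hy => hb _ (L y).2 hy, ?_, ?_⟩⟩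
    · exact isOpen_lt (by fun_prop) continuous_const
    · simpa using hε
  obtain ⟨h, -, h2, -⟩ := exists_homeomorph_image_interior_closure_frontier_eq_unitBall
    hQconv hint hQc.isBounded
  rw [hQc.isClosed.closure_eq] at h2
  exact ⟨e.trans ((h.image Q).trans (Homeomorph.setCongr h2))⟩

def hsub {r w : ℕ} (A : Fin w → Finset (Fin r)) : Submodule ℝ (Fin r → ℝ) where
  carrier := {x | ∀ j : Fin w, ∀ i ∈ A j, ∀ i' ∈ A j, x i = x i'}
  add_mem' := by
    intro x y hx hy j i hi i' hi'
    simp [hx j i hi i' hi', hy j i hi i' hi']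
  zero_mem' := by intro j i hi i' hi'; rfl
  smul_mem' := by
    intro a x hx j i hi i' hi'
    simp [hx j i hi i' hi']

lemma finrank_hsub {r w : ℕ} (A : Fin w → Finset (Fin r))
    (hdisj : ∀ j j', j ≠ j' → Disjoint (A j) (A j')) :
    Module.finrank ℝ (hsub A) = r - ∑ j, ((A j).card - 1) := by
  classical
  have huniq : ∀ j j' i, i ∈ A j → i ∈ A j' → j = j' := by
    intro j j' i hi hi'
    by_contra h
    exact Finset.disjoint_left.mp (hdisj j j' h) hi hi'
  -- a chosen element of each nonempty block
  have hm : ∃ m : Fin w → Option (Fin r), ∀ j i, i ∈ A j → ∃ a ∈ A j, m j = some a := by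
    refine ⟨fun j => if h : (A j).Nonempty then some h.choose else none, ?_⟩
    intro j i hi
    have h : (A j).Nonempty := ⟨i, hi⟩
    exact ⟨h.choose, h.choose_spec, by simp [h]⟩
  obtain ⟨m, hm⟩ := hm
  let B : Finset (Fin r) := Finset.univ.biUnion fun j => (A j).filter fun i => m j ≠ some i
  have hcard : ∀ j, ((A j).filter fun i => m j ≠ some i).card = (A j).card - 1 := by
    intro j
    rcases (A j).eq_empty_or_nonempty with h | ⟨i, hi⟩
    · simp [h]
    · obtain ⟨a, ha, hma⟩ := hm j i hi
      rw [← Finset.card_erase_of_mem ha]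
      congr 1
      ext x
      simp [hma, eq_comm, and_comm]
  have hBcard : B.card = ∑ j, ((A j).card - 1) := by
    rw [Finset.card_biUnion]
    · exact Finset.sum_congr rfl fun j _ => hcard j
    · intro j _ j' _ hne
      exact Finset.disjoint_of_subset_left (Finset.filter_subset _ _)
        (Finset.disjoint_of_subset_right (Finset.filter_subset _ _) (hdisj j j' hne))
  have hBc : Fintype.card {i // i ∉ B} = r - ∑ j, ((A j).card - 1) := by
    rw [Fintype.card_subtype_compl, Fintype.card_fin, ← hBcard]; simp
  rw [← hBc, ← Module.finrank_fintype_fun_eq_card ℝ]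
  -- representatives
  have hrep : ∀ i : Fin r, ∃ a : Fin r, a ∉ B ∧ (i ∉ B → a = i) ∧
      (∀ j, i ∈ A j → m j = some a) ∧ (a = i ∨ ∃ j, i ∈ A j ∧ a ∈ A j) := by
    intro i
    by_cases h : ∃ j, i ∈ A j
    · obtain ⟨j, hj⟩ := h
      obtain ⟨a, ha, hma⟩ := hm j i hj
      refine ⟨a, ?_, ?_, ?_, Or.inr ⟨j, hj, ha⟩⟩
      · simp only [B, Finset.mem_biUnion, Finset.mem_filter, not_exists, not_and]
        intro j' _ ha' 
        obtain rfl := huniq _ _ _ ha ha'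
        simp [hma]
      · intro hi
        simp only [B, Finset.mem_biUnion, Finset.mem_filter, not_exists, not_and] at hi
        have := hi j (Finset.mem_univ _) hj
        rw [hma] at this
        simpa using this
      · intro j' hj'
        obtain rfl := huniq _ _ _ hj hj'
        exact hma
    · push Not at h
      refine ⟨i, ?_, fun _ => rfl, fun j hj => absurd hj (h j), Or.inl rfl⟩
      simp [B, h]
  choose rep hr1 hr2 hr3 hr4 using hrep
  let f : hsub A →ₗ[ℝ] ({i // i ∉ B} → ℝ) :=
    { toFun := fun x i => x.1 i.1
      map_add' := fun _ _ => rfl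
      map_smul' := fun _ _ => rfl }
  refine (LinearEquiv.ofBijective f ⟨?_, ?_⟩).finrank_eq
  · intro x y hxy
    have key : ∀ z : hsub A, ∀ i, z.1 i = z.1 (rep i) := by
      intro z i
      rcases hr4 i with h | ⟨j, h1, h2⟩
      · rw [h]
      · exact z.2 j _ h1 _ h2
    ext i
    rw [key x, key y]
    exact congrFun hxy ⟨rep i, hr1 i⟩
  · intro y
    refine ⟨⟨fun i => y ⟨rep i, hr1 i⟩, ?_⟩, ?_⟩
    · intro j i hi i' hi'
      have : rep i = rep i' := by
        have := (hr3 i j hi).symm.trans (hr3 i' j hi')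
        simpa using this
      simp [this]
    · ext i
      show y ⟨rep i.1, _⟩ = y i
      congr 1
      exact Subtype.ext (hr2 i.1 i.2)

def usub {r w : ℕ} (A : Fin w → Finset (Fin r)) : Submodule ℝ (Fin r → ℝ) :=
  (LinearMap.ker ((∑ i, LinearMap.proj (R := ℝ) (φ := fun _ : Fin r => ℝ) i).domRestrict
    (hsub A))).map (hsub A).subtype

lemma mem_usub {r w : ℕ} (A : Fin w → Finset (Fin r)) (x : Fin r → ℝ) :
    x ∈ usub A ↔ x ∈ hsub A ∧ ∑ i, x i = 0 := by
  simp [usub, and_comm]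

lemma finrank_usub {r w : ℕ} (A : Fin w → Finset (Fin r))
    (hdisj : ∀ j j', j ≠ j' → Disjoint (A j) (A j')) :
    Module.finrank ℝ (usub A) = (r - ∑ j, ((A j).card - 1)) - 1 := by
  rw [← finrank_hsub A hdisj]
  rcases Nat.eq_zero_or_pos r with rfl | hr
  · rw [Module.finrank_zero_of_subsingleton, Module.finrank_zero_of_subsingleton]
  · unfold usub
    set f := (∑ i, LinearMap.proj (R := ℝ) (φ := fun _ : Fin r => ℝ) i).domRestrict (hsub A)
    rw [LinearEquiv.finrank_eq (Submodule.equivSubtypeMap (hsub A) (LinearMap.ker f)).symm]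
    have h := f.finrank_range_add_finrank_ker
    have hs : LinearMap.range f = ⊤ := by
      rw [LinearMap.range_eq_top]
      intro y
      refine ⟨⟨fun _ => y / r, fun _ _ _ _ _ => rfl⟩, ?_⟩
      have : (r : ℝ) ≠ 0 := by positivity
      simp [f]
      field_simp
    rw [hs, finrank_top, Module.finrank_self] at h
    omega

lemma perm_compact (r : ℕ) (s : ℕ → ℝ) : IsCompact (permutohedron r s) := by
  apply Set.Finite.isCompact_convexHull
  refine (Set.finite_range (fun σ : Equiv.Perm (Fin r) => fun i => s (σ i))).subset ?_
  rintro x ⟨σ, h⟩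
  exact ⟨σ, (funext h).symm⟩

lemma perm_sum (r : ℕ) (s : ℕ → ℝ) (x) (hx : x ∈ permutohedron r s) :
    ∑ i, x i = ∑ i : Fin r, s i := by
  have hconv : Convex ℝ {x : Fin r → ℝ | ∑ i, x i = ∑ i : Fin r, s i} := by
    intro x hx y hy a b ha hb hab
    simp only [Set.mem_ofPred_eq] at *
    simp only [Pi.add_apply, Pi.smul_apply, smul_eq_mul, Finset.sum_add_distrib,
      ← Finset.mul_sum, hx, hy, ← add_mul, hab, one_mul]
  refine convexHull_min ?_ hconv hx
  rintro x ⟨σ, h⟩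
  simp only [Set.mem_ofPred_eq, h]
  exact Equiv.sum_comp σ fun i => s i

noncomputable def ctr (r : ℕ) (s : ℕ → ℝ) : Fin r → ℝ :=
  ∑ σ : Equiv.Perm (Fin r), (Fintype.card (Equiv.Perm (Fin r)) : ℝ)⁻¹ • fun i => s (σ i)

lemma ctr_mem (r : ℕ) (s : ℕ → ℝ) : ctr r s ∈ permutohedron r s := by
  refine (convex_convexHull ℝ _).sum_mem (fun _ _ => by positivity) ?_ fun σ _ =>
    subset_convexHull _ _ ⟨σ, fun _ => rfl⟩
  simp only [Finset.sum_const, Finset.card_univ, nsmul_eq_mul]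
  exact mul_inv_cancel₀ (by simp [Fintype.card_ne_zero])

lemma ctr_const (r : ℕ) (s : ℕ → ℝ) (i j : Fin r) : ctr r s i = ctr r s j := by
  simp only [ctr, Finset.sum_apply, Pi.smul_apply, smul_eq_mul]
  rw [← Equiv.sum_comp (Equiv.mulRight (Equiv.swap i j))]
  simp

lemma ctr_dir (r : ℕ) (s : ℕ → ℝ) (hs : ∀ a b, a < b → s a + 1 ≤ s b) (i j : Fin r) (t : ℝ)
    (ht0 : 0 ≤ t) (ht : t ≤ (Fintype.card (Equiv.Perm (Fin r)) : ℝ)⁻¹) :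
    ctr r s + t • (Pi.single i 1 - Pi.single j 1) ∈ permutohedron r s := by
  rcases eq_or_ne i j with rfl | hij
  · simpa using ctr_mem r s
  set N : ℝ := (Fintype.card (Equiv.Perm (Fin r)) : ℝ) with hN
  have hN0 : 0 < N := by rw [hN]; exact_mod_cast Fintype.card_pos
  obtain ⟨τ, hτ⟩ : ∃ τ : Equiv.Perm (Fin r), τ j < τ i := by
    rcases lt_or_gt_of_ne hij with h | h
    · exact ⟨Equiv.swap i j, by simpa using h⟩
    · exact ⟨1, by simpa using h⟩
  set D : ℝ := s (τ i) - s (τ j) with hD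
  have hD1 : 1 ≤ D := by have := hs (τ j) (τ i) hτ; linarith
  have hbig : ctr r s + (N⁻¹ * D) • (Pi.single i 1 - Pi.single j 1) ∈ permutohedron r s := by
    let τ' := τ * Equiv.swap i j
    have hmem : ∑ σ : Equiv.Perm (Fin r), N⁻¹ •
        (fun k => s ((if σ = τ' then τ else σ) k) : Fin r → ℝ) ∈ permutohedron r s := by
      refine (convex_convexHull ℝ _).sum_mem (fun _ _ => by positivity) ?_ fun σ _ =>
        subset_convexHull _ _ ⟨_, fun _ => rfl⟩
      simp only [Finset.sum_const, Finset.card_univ, nsmul_eq_mul]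
      exact mul_inv_cancel₀ hN0.ne'
    convert hmem using 1
    symm
    rw [← sub_eq_iff_eq_add', ctr, ← Finset.sum_sub_distrib,
      Finset.sum_eq_single τ']
    · ext k
      simp only [if_true, Pi.sub_apply, Pi.smul_apply, smul_eq_mul, τ', Equiv.Perm.mul_apply]
      rcases eq_or_ne k i with rfl | hki
      · simp [hij, hD, hN]; ring
      rcases eq_or_ne k j with rfl | hkj
      · simp [hki, hD, hN]; ring
      · simp [hki, hkj, Equiv.swap_apply_of_ne_of_ne, hN]
    · intro σ _ hσ
      simp [hσ, hN]
    · simp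
  have hpos : 0 < N⁻¹ * D := by positivity
  have hle : t / (N⁻¹ * D) ≤ 1 := by
    rw [div_le_one hpos]
    have : N⁻¹ * 1 ≤ N⁻¹ * D := by gcongr
    linarith
  have := (convex_convexHull ℝ _).add_smul_mem (ctr_mem r s) hbig (t := t / (N⁻¹ * D))
    ⟨by positivity, hle⟩
  rwa [smul_smul, div_mul_cancel₀ _ hpos.ne'] at this

lemma ctr_ball (r : ℕ) (s : ℕ → ℝ) (hs : ∀ a b, a < b → s a + 1 ≤ s b) :
    ∃ ε : ℝ, 0 < ε ∧ ∀ u : Fin r → ℝ, ∑ i, u i = 0 → ‖u‖ < ε → ctr r s + u ∈ permutohedron r s := by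
  rcases Nat.eq_zero_or_pos r with rfl | hr
  · refine ⟨1, one_pos, fun u _ _ => ?_⟩
    rw [Subsingleton.elim (ctr 0 s + u) (ctr 0 s)]
    exact ctr_mem 0 s
  set N : ℝ := (Fintype.card (Equiv.Perm (Fin r)) : ℝ) with hN
  have hN0 : 0 < N := by rw [hN]; exact_mod_cast Fintype.card_pos
  have hr0 : (0 : ℝ) < r := by exact_mod_cast hr
  refine ⟨N⁻¹ / r, by positivity, fun u hu hn => ?_⟩
  let z : Fin r := ⟨0, hr⟩
  have key : ∀ i, ctr r s + (r * u i) • (Pi.single i 1 - Pi.single z 1) ∈ permutohedron r s := by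
    intro i
    have h1 : |u i| < N⁻¹ / r := lt_of_le_of_lt (norm_le_pi_norm u i) hn
    rw [lt_div_iff₀ hr0] at h1
    rcases le_total 0 (u i) with h | h
    · rw [abs_of_nonneg h] at h1
      exact ctr_dir r s hs i z _ (by positivity) (by linarith)
    · rw [abs_of_nonpos h] at h1
      have := ctr_dir r s hs z i (r * (-u i)) (mul_nonneg hr0.le (by linarith)) (by linarith)
      convert this using 2
      module
  have hmem : ∑ i : Fin r, (r : ℝ)⁻¹ •
      (ctr r s + (r * u i) • (Pi.single i 1 - Pi.single z 1)) ∈ permutohedron r s :=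
    (convex_convexHull ℝ _).sum_mem (t := Finset.univ) (w := fun _ : Fin r => (r : ℝ)⁻¹)
    (fun _ _ => by positivity) (by simp [hr0.ne']) fun i _ => key i
  convert hmem using 1
  ext k
  simp only [Pi.add_apply, Finset.sum_apply, Pi.smul_apply, smul_eq_mul, Pi.sub_apply, mul_add,
    Finset.sum_add_distrib, Finset.sum_const, Finset.card_univ, Fintype.card_fin, nsmul_eq_mul]
  have h1 : ∀ i, (r : ℝ)⁻¹ * (r * u i * ((Pi.single i 1 : Fin r → ℝ) k - (Pi.single z 1 : Fin r → ℝ) k))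
      = u i * (Pi.single i 1 : Fin r → ℝ) k - u i * (Pi.single z 1 : Fin r → ℝ) k := by
    intro i; field_simp
  simp only [h1, Finset.sum_sub_distrib, ← Finset.sum_mul, hu]
  simp [Pi.single_apply, hr0.ne']

lemma main_ball (r w : ℕ) (s : ℕ → ℝ) (hs : ∀ a b, a < b → s a + 1 ≤ s b)
    (A : Fin w → Finset (Fin r)) (hdisj : ∀ j j', j ≠ j' → Disjoint (A j) (A j')) :
    Nonempty (↥(permutohedron r s ∩
          {x : Fin r → ℝ | ∀ j : Fin w, ∀ i ∈ A j, ∀ i' ∈ A j, x i = x i'}) ≃ₜ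
      Metric.closedBall (0 : EuclideanSpace ℝ (Fin (r - ∑ j, ((A j).card - 1) - 1))) 1) := by
  obtain ⟨ε, hε, hb⟩ := ctr_ball r s hs
  have hH : {x : Fin r → ℝ | ∀ j : Fin w, ∀ i ∈ A j, ∀ i' ∈ A j, x i = x i'}
    = (hsub A : Set (Fin r → ℝ)) := rfl
  have hcH : ctr r s ∈ hsub A := fun j i _ i' _ => ctr_const r s i i'
  rw [hH]
  refine homeo_ball _ ((perm_compact r s).inter_right (hsub A).closed_of_finiteDimensional)
    ((convex_convexHull ℝ _).inter (hsub A).convex) (usub A) (ctr r s) ?_ ε hε ?_ _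
    (finrank_usub A hdisj)
  · rintro p ⟨hp, hp2⟩
    rw [mem_usub]
    refine ⟨sub_mem hp2 hcH, ?_⟩
    simp [perm_sum r s p hp, perm_sum r s _ (ctr_mem r s)]
  · intro u hu hn
    rw [mem_usub] at hu
    exact ⟨hb u hu.2 hn, add_mem hcH hu.1⟩

/-- For a strictly increasing sequence of positive integers `s_1 < ⋯ < s_r`
and pairwise disjoint subsets `A_1,…,A_w ⊆ {1,…,r}` with `|A_j| = k_j`, set
`H = {x : x_i = x_{i'} whenever i, i' lie in the same A_j}` and `K = ∑ (k_j − 1)`.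
Then `Π_S ∩ H` is homeomorphic to `Π_{(s_1,…,s_{r−K})}`; in particular it is nonempty. -/
theorem permutohedron_inter_subspace (r w : ℕ) (s : ℕ → ℕ)
    (hmono : StrictMono s) (hpos : ∀ i, 0 < s i)
    (A : Fin w → Finset (Fin r))
    (hdisj : ∀ j j', j ≠ j' → Disjoint (A j) (A j')) :
    Nonempty
      (↥(permutohedron r (fun i => (s i : ℝ)) ∩
          {x : Fin r → ℝ | ∀ j : Fin w, ∀ i ∈ A j, ∀ i' ∈ A j, x i = x i'}) ≃ₜ
        ↥(permutohedron (r - ∑ j, ((A j).card - 1)) (fun i => (s i : ℝ)))) ∧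
    (permutohedron r (fun i => (s i : ℝ)) ∩
        {x : Fin r → ℝ | ∀ j : Fin w, ∀ i ∈ A j, ∀ i' ∈ A j, x i = x i'}).Nonempty := by
  have hs : ∀ a b, a < b → (s a : ℝ) + 1 ≤ (s b : ℝ) := by
    intro a b hab
    exact_mod_cast hmono hab
  refine ⟨?_, ctr r _, ctr_mem r _, fun j i _ i' _ => ctr_const r _ i i'⟩
  obtain ⟨e⟩ := main_ball r w (fun i => (s i : ℝ)) hs A hdisj
  obtain ⟨e'⟩ := main_ball (r - ∑ j, ((A j).card - 1)) 0 (fun i => (s i : ℝ)) hs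
    (fun j => j.elim0) (fun j => j.elim0)
  have h : permutohedron (r - ∑ j, ((A j).card - 1)) (fun i => (s i : ℝ)) ∩
      {x | ∀ j : Fin 0, ∀ i ∈ (j.elim0 : Finset (Fin (r - ∑ j, ((A j).card - 1)))),
        ∀ i' ∈ (j.elim0 : Finset (Fin (r - ∑ j, ((A j).card - 1)))), x i = x i'}
      = permutohedron (r - ∑ j, ((A j).card - 1)) (fun i => (s i : ℝ)) := by
    refine Set.inter_eq_left.mpr fun x _ j => j.elim0
  exact ⟨e.trans (e'.symm.trans (Homeomorph.setCongr h))⟩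
end
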